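/- Let n ≥ 2, let Λ : ℕ → [0,1] be nonincreasing with Λ(0) = 1 and satisfying hypothesis H_Λ, and let μ be a probability measure on [0,1] satisfying hypothesis H_μ, and let m★ be the unique zero of the mean field h in F_n^+. Then m★ is an attracting equilibrium of the ODE dm/dt = −h(m) on F_n^+, and for any gain sequence (ε_t) in (0,1) with Σ_t ε_t = +∞ and Σ_t ε_t² < ∞, the SOM process m(t+1) = T_{ε_{t+1}}(m(t), X_{t+1}) with i.i.d. inputs X_t of law μ and initial condition m(0) ∈ F_n^+ converges to m★ almost surely. -/

import Mathlib

open MeasureTheory ProbabilityTheory Set Filter Topology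
open scoped Classical ENNReal

noncomputable section

/-- The winning unit: the smallest index `i` minimizing `|x - m i|`. -/
def winner {n : ℕ} [NeZero n] (m : Fin n → ℝ) (x : ℝ) : Fin n :=
  (Finset.univ.filter fun i : Fin n => ∀ j, |x - m i| ≤ |x - m j|).min'
    (by
      obtain ⟨i, -, hi⟩ := Finset.exists_min_image (Finset.univ : Finset (Fin n))
        (fun i => |x - m i|) ⟨0, Finset.mem_univ _⟩
      exact ⟨i, Finset.mem_filter.mpr ⟨Finset.mem_univ _,
        fun j => hi j (Finset.mem_univ _)⟩⟩)

/-- One step of the one-dimensional SOM algorithm. -/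
def somUpdate {n : ℕ} [NeZero n] (Λ : ℕ → ℝ) (ε : ℝ) (m : Fin n → ℝ) (x : ℝ) :
    Fin n → ℝ :=
  fun i => m i - ε * Λ (Nat.dist i.1 (winner m x).1) * (m i - x)

/-- `F_n^+` : increasingly ordered states with values in `(0,1)`. -/
def Fplus (n : ℕ) : Set (Fin n → ℝ) :=
  {m | StrictMono m ∧ ∀ i, m i ∈ Set.Ioo (0 : ℝ) 1}

/-- The SOM process started at `m0`. -/
def somProc {n : ℕ} [NeZero n] {Ω : Type*} (Λ : ℕ → ℝ) (ε : ℕ → ℝ)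
    (X : ℕ → Ω → ℝ) (m0 : Fin n → ℝ) : ℕ → Ω → Fin n → ℝ
  | 0 => fun _ => m0
  | t + 1 => fun ω => somUpdate Λ (ε (t + 1)) (somProc Λ ε X m0 t ω) (X (t + 1) ω)

/-- The Voronoi boundary points `x_0 = 0`, `x_j = (m_j + m_{j+1})/2`, `x_n = 1`. -/
def somBnd {n : ℕ} (m : Fin n → ℝ) (j : ℕ) : ℝ :=
  if j = 0 then 0
  else if h : j < n then
    (m ⟨j - 1, lt_of_le_of_lt (Nat.sub_le j 1) h⟩ + m ⟨j, h⟩) / 2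
  else 1

/-- The mean field of the one-dimensional SOM algorithm. -/
def meanField {n : ℕ} (Λ : ℕ → ℝ) (f : ℝ → ℝ) (m : Fin n → ℝ) : Fin n → ℝ :=
  fun i => ∑ j : Fin n, Λ (Nat.dist i.1 j.1) *
    ∫ x in Set.Icc (somBnd m j.1) (somBnd m (j.1 + 1)), (m i - x) * f x

/-- Hypothesis `H_Λ`. -/
def HLambda (n : ℕ) (Λ : ℕ → ℝ) : Prop :=
  ∃ k₀ : ℕ, 2 * k₀ + 1 < n ∧ Λ (k₀ + 1) < Λ k₀

/-- Hypothesis `H_μ` on the density `f`. -/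
def Hmu (f : ℝ → ℝ) : Prop :=
  (∀ x ∈ Set.Ioo (0 : ℝ) 1, 0 < f x) ∧
  (StrictConcaveOn ℝ (Set.Ioo (0 : ℝ) 1) (fun x => Real.log (f x)) ∨
    (ConcaveOn ℝ (Set.Ioo (0 : ℝ) 1) (fun x => Real.log (f x)) ∧
      ∃ a b : ℝ, Tendsto f (nhdsWithin 0 (Set.Ioi 0)) (nhds a) ∧
        Tendsto f (nhdsWithin 1 (Set.Iio 1)) (nhds b) ∧ 0 < a + b))

/-- Number of Voronoi cut points strictly below `x`. -/
def cw {n : ℕ} (m : Fin n → ℝ) (x : ℝ) : ℕ :=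
  ((Finset.range (n - 1)).filter (fun j => somBnd m (j + 1) < x)).card

/-- Pointwise field. -/
def HH {n : ℕ} (Λ : ℕ → ℝ) (m : Fin n → ℝ) (x : ℝ) (i : Fin n) : ℝ :=
  Λ (Nat.dist i.1 (cw m x)) * (m i - x)

/-- Closed ordered simplex. -/
def KK (n : ℕ) : Set (Fin n → ℝ) := {m | Monotone m ∧ ∀ i, m i ∈ Set.Icc (0 : ℝ) 1}

/-- Averaged field. -/
def hf {n : ℕ} (Λ : ℕ → ℝ) (μ : Measure ℝ) (m : Fin n → ℝ) (i : Fin n) : ℝ :=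
  ∫ x, HH Λ m x i ∂μ

lemma somBnd_mid {n : ℕ} (m : Fin n → ℝ) (j : ℕ) (h : j + 1 < n) :
    somBnd m (j + 1) = (m ⟨j, by omega⟩ + m ⟨j + 1, h⟩) / 2 := by
  simp [somBnd, h]

lemma somBnd_mono_arg {n : ℕ} {m m' : Fin n → ℝ} (h : m ≤ m') (j : ℕ) :
    somBnd m j ≤ somBnd m' j := by
  unfold somBnd
  split_ifs with h1 h2
  · exact le_rfl
  · have := h ⟨j - 1, lt_of_le_of_lt (Nat.sub_le j 1) h2⟩
    have := h ⟨j, h2⟩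
    linarith
  · exact le_rfl

lemma cw_anti {n : ℕ} {m m' : Fin n → ℝ} (h : m ≤ m') (x : ℝ) : cw m' x ≤ cw m x := by
  unfold cw
  apply Finset.card_le_card
  intro j hj
  simp only [Finset.mem_filter] at hj ⊢
  exact ⟨hj.1, (somBnd_mono_arg h _).trans_lt hj.2⟩

lemma cw_lt {n : ℕ} (hn : 0 < n) (m : Fin n → ℝ) (x : ℝ) : cw m x < n := by
  have : cw m x ≤ n - 1 := by
    unfold cw
    exact (Finset.card_filter_le _ _).trans (by simp)
  omega

lemma le_cw {n : ℕ} {m : Fin n → ℝ} (hm : Monotone m) {x : ℝ} {i : Fin n} (h : m i < x) :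
    i.1 ≤ cw m x := by
  unfold cw
  calc i.1 = (Finset.range i.1).card := by simp
    _ ≤ _ := by
      apply Finset.card_le_card
      intro j hj
      have hi := i.2
      simp only [Finset.mem_filter, Finset.mem_range] at hj ⊢
      refine ⟨by omega, ?_⟩
      rw [somBnd_mid m j (by omega)]
      have h1 : m ⟨j, by omega⟩ ≤ m i := hm (by rw [Fin.le_def]; simp; omega)
      have h2 : m ⟨j + 1, by omega⟩ ≤ m i := hm (by rw [Fin.le_def]; simp; omega)
      linarith

lemma cw_le {n : ℕ} {m : Fin n → ℝ} (hm : Monotone m) {x : ℝ} {i : Fin n} (h : x ≤ m i) :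
    cw m x ≤ i.1 := by
  unfold cw
  calc _ ≤ (Finset.range i.1).card := by
        apply Finset.card_le_card
        intro j hj
        simp only [Finset.mem_filter, Finset.mem_range] at hj ⊢
        by_contra hlt
        obtain ⟨hj1, hj2⟩ := hj
        rw [somBnd_mid m j (by omega)] at hj2
        have h1 : m i ≤ m ⟨j, by omega⟩ := hm (by rw [Fin.le_def]; simp; omega)
        have h2 : m i ≤ m ⟨j + 1, by omega⟩ := hm (by rw [Fin.le_def]; simp; omega)
        linarith
    _ = i.1 := by simp

section pointwise
variable {n : ℕ} {Λ : ℕ → ℝ}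

lemma HH_lip (hΛanti : Antitone Λ) (hΛr : ∀ k, Λ k ∈ Set.Icc (0 : ℝ) 1)
    {m m' : Fin n → ℝ} (hm : Monotone m) (hm' : Monotone m') (h : m ≤ m') (x : ℝ) (i : Fin n) :
    HH Λ m' x i - HH Λ m x i ≤ 2 * (m' i - m i) := by
  have hi := h i
  have hc := cw_anti h x
  unfold HH
  set c := cw m x with hcdef
  set c' := cw m' x with hcdef'
  have ha := hΛr (Nat.dist i.1 c)
  have ha' := hΛr (Nat.dist i.1 c')
  rcases lt_or_ge (m' i) x with h1 | h1
  · have h2 : i.1 ≤ c' := le_cw hm' h1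
    have h3 : Λ (Nat.dist i.1 c) ≤ Λ (Nat.dist i.1 c') := hΛanti (by unfold Nat.dist; omega)
    nlinarith [ha.1, ha.2, ha'.1, ha'.2]
  · rcases le_or_gt x (m i) with h4 | h4
    · have h2 : c ≤ i.1 := cw_le hm h4
      have h3 : Λ (Nat.dist i.1 c') ≤ Λ (Nat.dist i.1 c) := hΛanti (by unfold Nat.dist; omega)
      nlinarith [ha.1, ha.2, ha'.1, ha'.2]
    · nlinarith [ha.1, ha.2, ha'.1, ha'.2]

lemma HH_gap (hΛanti : Antitone Λ) (hΛr : ∀ k, Λ k ∈ Set.Icc (0 : ℝ) 1)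
    {m : Fin n → ℝ} (hm : Monotone m) (x : ℝ) {i j : Fin n} (hij : i ≤ j) :
    HH Λ m x j - HH Λ m x i ≤ m j - m i := by
  have hi := hm hij
  unfold HH
  set c := cw m x with hcdef
  have ha := hΛr (Nat.dist i.1 c)
  have hb := hΛr (Nat.dist j.1 c)
  have hij' : i.1 ≤ j.1 := hij
  rcases le_or_gt x (m i) with h1 | h1
  · have h2 : c ≤ i.1 := cw_le hm h1
    have h3 : Λ (Nat.dist j.1 c) ≤ Λ (Nat.dist i.1 c) := hΛanti (by unfold Nat.dist; omega)
    nlinarith [ha.1, ha.2, hb.1, hb.2]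
  · rcases lt_or_ge (m j) x with h4 | h4
    · have h2 : j.1 ≤ c := le_cw hm h4
      have h3 : Λ (Nat.dist i.1 c) ≤ Λ (Nat.dist j.1 c) := hΛanti (by unfold Nat.dist; omega)
      nlinarith [ha.1, ha.2, hb.1, hb.2]
    · nlinarith [ha.1, ha.2, hb.1, hb.2]

/-- monotonicity on ties -/
lemma HH_tie (hΛanti : Antitone Λ)
    {m : Fin n → ℝ} (hm : Monotone m) (x : ℝ) {i j : Fin n} (hij : i ≤ j) (he : m i = m j) :
    HH Λ m x j ≤ HH Λ m x i := by
  unfold HH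
  set c := cw m x with hcdef
  have hij' : i.1 ≤ j.1 := hij
  rw [he]
  rcases le_or_gt x (m i) with h1 | h1
  · have h2 : c ≤ i.1 := cw_le hm h1
    have h3 : Λ (Nat.dist j.1 c) ≤ Λ (Nat.dist i.1 c) := hΛanti (by unfold Nat.dist; omega)
    nlinarith
  · rw [he] at h1
    have h2 : j.1 ≤ c := le_cw hm h1
    have h3 : Λ (Nat.dist i.1 c) ≤ Λ (Nat.dist j.1 c) := hΛanti (by unfold Nat.dist; omega)
    nlinarith

lemma HH_le (hΛr : ∀ k, Λ k ∈ Set.Icc (0 : ℝ) 1) {m : Fin n → ℝ} {i : Fin n} (h0 : 0 ≤ m i)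
    {x : ℝ} (hx : 0 ≤ x) : HH Λ m x i ≤ m i := by
  have ha := hΛr (Nat.dist i.1 (cw m x))
  unfold HH
  nlinarith [ha.1, ha.2]

lemma HH_ge (hΛr : ∀ k, Λ k ∈ Set.Icc (0 : ℝ) 1) {m : Fin n → ℝ} {i : Fin n} (h0 : m i ≤ 1)
    {x : ℝ} (hx : x ≤ 1) : - HH Λ m x i ≤ 1 - m i := by
  have ha := hΛr (Nat.dist i.1 (cw m x))
  unfold HH
  nlinarith [ha.1, ha.2]

lemma HH_abs (hΛr : ∀ k, Λ k ∈ Set.Icc (0 : ℝ) 1) (m : Fin n → ℝ) (i : Fin n) 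
    (x : ℝ) : |HH Λ m x i| ≤ |m i - x| := by
  have ha := hΛr (Nat.dist i.1 (cw m x))
  unfold HH
  rw [abs_mul, abs_of_nonneg ha.1]
  exact mul_le_of_le_one_left (abs_nonneg _) ha.2

lemma step_KK {m v : Fin n → ℝ} {η : ℝ} (hm : m ∈ KK n) (h0 : 0 ≤ η) (h1 : η ≤ 1)
    (hgap : ∀ i j, i ≤ j → v j - v i ≤ m j - m i) (hlo : ∀ i, v i ≤ m i)
    (hhi : ∀ i, - v i ≤ 1 - m i) : (fun i => m i - η * v i) ∈ KK n := by
  refine ⟨fun i j hij => ?_, fun i => ⟨?_, ?_⟩⟩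
  · have := hgap i j hij
    have := hm.1 hij
    show m i - η * v i ≤ m j - η * v j
    nlinarith
  · have := hlo i
    have := (hm.2 i).1
    show 0 ≤ m i - η * v i
    nlinarith
  · have := hhi i
    have := (hm.2 i).2
    show m i - η * v i ≤ 1
    nlinarith

lemma step_Fplus {m v : Fin n → ℝ} {η : ℝ} (hm : m ∈ Fplus n) (h0 : 0 ≤ η) (h1 : η < 1)
    (hgap : ∀ i j, i ≤ j → v j - v i ≤ m j - m i) (hlo : ∀ i, v i ≤ m i)
    (hhi : ∀ i, - v i ≤ 1 - m i) : (fun i => m i - η * v i) ∈ Fplus n := by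
  refine ⟨fun i j hij => ?_, fun i => ⟨?_, ?_⟩⟩
  · have := hgap i j hij.le
    have := hm.1 hij
    show m i - η * v i < m j - η * v j
    nlinarith
  · have := hlo i
    have := (hm.2 i).1
    show 0 < m i - η * v i
    nlinarith
  · have := hhi i
    have := (hm.2 i).2
    show m i - η * v i < 1
    nlinarith

lemma Fplus_sub_KK : Fplus n ⊆ KK n := fun _ hm =>
  ⟨hm.1.monotone, fun i => ⟨(hm.2 i).1.le, (hm.2 i).2.le⟩⟩

/-- the cut points are monotone, so `cw` describes the cell of `x`. -/
lemma somBnd_monotone {m : Fin n → ℝ} (hm : m ∈ KK n) : Monotone (somBnd m) := by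
  apply monotone_nat_of_le_succ
  intro j
  rcases lt_or_ge (j + 1) n with h | h
  · rw [somBnd_mid m j h]
    have h1 : m ⟨j, by omega⟩ ≤ m ⟨j + 1, h⟩ := hm.1 (by rw [Fin.le_def]; simp)
    rcases Nat.eq_zero_or_pos j with rfl | hj
    · simp only [somBnd, if_true]
      have := (hm.2 ⟨0, by omega⟩).1
      linarith
    · obtain ⟨k, rfl⟩ : ∃ k, j = k + 1 := ⟨j - 1, by omega⟩
      rw [somBnd_mid m k (by omega)]
      have h2 : m ⟨k, by omega⟩ ≤ m ⟨k + 1, by omega⟩ := hm.1 (by rw [Fin.le_def]; simp)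
      linarith
  · have : somBnd m (j + 1) = 1 := by simp [somBnd]; omega
    rw [this]
    unfold somBnd
    split_ifs with h1 h2
    · norm_num
    · have := (hm.2 ⟨j - 1, lt_of_le_of_lt (Nat.sub_le j 1) h2⟩).2
      have := (hm.2 ⟨j, h2⟩).2
      linarith
    · norm_num

lemma cw_spec (hn : 0 < n) {m : Fin n → ℝ} (hm : Monotone (somBnd m)) {x : ℝ} (j : ℕ)
    (hj : j + 1 < n) : somBnd m (j + 1) < x ↔ j < cw m x := by
  constructor
  · intro h
    have : (Finset.range (j + 1)).card ≤ cw m x := by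
      apply Finset.card_le_card
      intro k hk
      simp only [Finset.mem_filter, Finset.mem_range] at hk ⊢
      exact ⟨by omega, (hm (by omega)).trans_lt h⟩
    simpa using this
  · intro h
    by_contra hx
    have : cw m x ≤ (Finset.range j).card := by
      apply Finset.card_le_card
      intro k hk
      simp only [Finset.mem_filter, Finset.mem_range] at hk ⊢
      by_contra hkj
      have := hm (show j + 1 ≤ k + 1 by omega)
      linarith [hk.2]
    simp at this
    omega

lemma cw_eq_iff (hn : 0 < n) {m : Fin n → ℝ} (hm : Monotone (somBnd m)) {x : ℝ}
    (hx : x ∈ Set.Ioo (0 : ℝ) 1) (j : ℕ) (hj : j < n) :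
    cw m x = j ↔ somBnd m j < x ∧ x ≤ somBnd m (j + 1) := by
  have hlt := cw_lt hn m x
  have hA : somBnd m j < x ↔ j ≤ cw m x := by
    rcases Nat.eq_zero_or_pos j with rfl | h
    · simp [somBnd, hx.1]
    · obtain ⟨k, rfl⟩ : ∃ k, j = k + 1 := ⟨j - 1, by omega⟩
      rw [cw_spec hn hm k hj]
      omega
  have hB : x ≤ somBnd m (j + 1) ↔ cw m x ≤ j := by
    rcases lt_or_ge (j + 1) n with h | h
    · rw [← not_lt, cw_spec hn hm j h]
      omega
    · have : somBnd m (j + 1) = 1 := by simp [somBnd]; omega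
      rw [this]
      exact ⟨fun _ => by omega, fun _ => hx.2.le⟩
  rw [hA, hB]
  omega

lemma winner_eq [NeZero n] {m : Fin n → ℝ} (hm : StrictMono m) (x : ℝ) :
    (winner m x).1 = cw m x := by
  have hn : 0 < n := Nat.pos_of_ne_zero (NeZero.ne n)
  have hw := Finset.min'_mem (Finset.univ.filter fun i : Fin n => ∀ j, |x - m i| ≤ |x - m j|)
    (by
      obtain ⟨i, -, hi⟩ := Finset.exists_min_image (Finset.univ : Finset (Fin n))
        (fun i => |x - m i|) ⟨0, Finset.mem_univ _⟩
      exact ⟨i, Finset.mem_filter.mpr ⟨Finset.mem_univ _,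
        fun j => hi j (Finset.mem_univ _)⟩⟩)
  have hmin : ∀ i : Fin n, (∀ j, |x - m i| ≤ |x - m j|) → winner m x ≤ i := by
    intro i hi
    exact Finset.min'_le _ _ (Finset.mem_filter.mpr ⟨Finset.mem_univ _, hi⟩)
  replace hw : ∀ j, |x - m (winner m x)| ≤ |x - m j| := (Finset.mem_filter.mp hw).2
  set w := winner m x with hwdef
  have hwn := w.2
  apply le_antisymm
  · -- every cut before w is below x
    unfold cw
    calc w.1 = (Finset.range w.1).card := by simp
      _ ≤ _ := by
        apply Finset.card_le_card
        intro j hj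
        simp only [Finset.mem_filter, Finset.mem_range] at hj ⊢
        refine ⟨by omega, ?_⟩
        rw [somBnd_mid m j (by omega)]
        obtain ⟨k, hk⟩ : ∃ k, w.1 = k + 1 := ⟨w.1 - 1, by omega⟩
        have hkn : k < n := by omega
        have h1 : m ⟨j, by omega⟩ ≤ m ⟨k, hkn⟩ :=
          hm.monotone (by rw [Fin.le_def]; simp; omega)
        have h2 : m ⟨j + 1, by omega⟩ ≤ m w :=
          hm.monotone (by rw [Fin.le_def]; simp; omega)
        have h3 : m ⟨k, hkn⟩ < m w := hm (by rw [Fin.lt_def]; simp; omega)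
        by_contra hcon
        have h4 : x ≤ (m ⟨k, hkn⟩ + m w) / 2 := by linarith
        have h5 : |x - m ⟨k, hkn⟩| ≤ |x - m w| := by
          rw [abs_sub_comm x (m w), abs_of_nonneg (by linarith : 0 ≤ m w - x)]
          exact abs_le.2 ⟨by linarith, by linarith⟩
        have h6 := hmin ⟨k, hkn⟩ (fun i => h5.trans (hw i))
        rw [Fin.le_def] at h6
        simp at h6
        omega
  · unfold cw
    calc _ ≤ (Finset.range w.1).card := by
          apply Finset.card_le_card
          intro j hj
          simp only [Finset.mem_filter, Finset.mem_range] at hj ⊢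
          obtain ⟨hj1, hj2⟩ := hj
          by_contra hcon
          rw [somBnd_mid m j (by omega)] at hj2
          have h1 : m w ≤ m ⟨j, by omega⟩ :=
            hm.monotone (by rw [Fin.le_def]; simp; omega)
          have h3 : m ⟨j, by omega⟩ < m ⟨j + 1, by omega⟩ := hm (by rw [Fin.lt_def]; simp)
          have h5 := hw ⟨j + 1, by omega⟩
          rw [abs_of_nonneg (by linarith : 0 ≤ x - m w)] at h5
          have : |x - m ⟨j + 1, by omega⟩| < x - m w := 
            abs_lt.2 ⟨by linarith, by linarith⟩
          linarith
      _ = w.1 := by simp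

end pointwise


section measure
variable {n : ℕ} {Λ : ℕ → ℝ} {μ : Measure ℝ}

lemma continuous_somBnd (j : ℕ) : Continuous (fun m : Fin n → ℝ => somBnd m j) := by
  unfold somBnd
  split_ifs <;> fun_prop

lemma measurable_cw : Measurable (fun p : (Fin n → ℝ) × ℝ => cw p.1 p.2) := by
  unfold cw
  simp only [Finset.card_filter]
  refine Finset.measurable_sum _ (fun j _ => ?_)
  refine Measurable.ite ?_ measurable_const measurable_const
  exact measurableSet_lt ((continuous_somBnd (j + 1)).measurable.comp measurable_fst) measurable_snd

lemma measurable_HH (i : Fin n) : Measurable (fun p : (Fin n → ℝ) × ℝ => HH Λ p.1 p.2 i) := by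
  unfold HH
  refine Measurable.mul ?_ ?_
  · exact (measurable_of_countable (fun k : ℕ => Λ (Nat.dist i.1 k))).comp measurable_cw
  · exact ((measurable_pi_apply i).comp measurable_fst).sub measurable_snd

lemma measurable_HH_right (m : Fin n → ℝ) (i : Fin n) : Measurable (fun x => HH Λ m x i) := by
  have h : Measurable (fun x : ℝ => ((m, x) : (Fin n → ℝ) × ℝ)) := measurable_prodMk_left
  have h2 := (measurable_HH (Λ := Λ) i).comp h
  rw [Function.comp_def] at h2
  exact h2

lemma integrable_HH [IsProbabilityMeasure μ] (hμ : ∀ᵐ x ∂μ, x ∈ Set.Ioo (0 : ℝ) 1)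
    (hΛr : ∀ k, Λ k ∈ Set.Icc (0 : ℝ) 1) (m : Fin n → ℝ) (i : Fin n) :
    Integrable (fun x => HH Λ m x i) μ := by
  refine Integrable.of_bound (measurable_HH_right m i).aestronglyMeasurable (|m i| + 1) ?_
  filter_upwards [hμ] with x hx
  refine (HH_abs hΛr m i x).trans ?_
  refine (abs_sub _ _).trans ?_
  rw [abs_of_pos hx.1]
  linarith [hx.2]

lemma continuous_hf [IsProbabilityMeasure μ] [NullSingletonClass μ] (hμ : ∀ᵐ x ∂μ, x ∈ Set.Ioo (0 : ℝ) 1)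
    (hΛr : ∀ k, Λ k ∈ Set.Icc (0 : ℝ) 1) (i : Fin n) :
    Continuous (fun m : Fin n → ℝ => hf Λ μ m i) := by
  rw [continuous_iff_continuousAt]
  intro m
  unfold hf
  refine continuousAt_of_dominated (bound := fun _ => |m i| + 2) ?_ ?_ (integrable_const _) ?_
  · exact Eventually.of_forall fun m => (measurable_HH_right m i).aestronglyMeasurable
  · have h1 : ∀ᶠ m' : Fin n → ℝ in 𝓝 m, |m' i| < |m i| + 1 := by
      have : ContinuousAt (fun m' : Fin n → ℝ => |m' i|) m :=
        ((continuous_apply i).abs).continuousAt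
      exact this.eventually_lt continuousAt_const (by linarith)
    filter_upwards [h1] with m' hm'
    filter_upwards [hμ] with x hx
    refine (HH_abs hΛr m' i x).trans ?_
    refine (abs_sub _ _).trans ?_
    rw [abs_of_pos hx.1]
    linarith [hx.2]
  · have h2 : ∀ᵐ x ∂μ, ∀ j ∈ Finset.range (n - 1), somBnd m (j + 1) ≠ x := by
      rw [Finset.eventually_all]
      intro j _
      have := (measure_singleton (μ := μ) (somBnd m (j + 1)))
      rw [ae_iff]
      convert this using 2
      ext x
      simp [eq_comm]
    filter_upwards [h2] with x hx
    have h3 : ∀ᶠ m' in 𝓝 m, ∀ j ∈ Finset.range (n - 1),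
        (somBnd m' (j + 1) < x ↔ somBnd m (j + 1) < x) := by
      rw [Finset.eventually_all]
      intro j hj
      rcases lt_or_gt_of_ne (hx j hj) with h | h
      · filter_upwards [(continuous_somBnd (j + 1)).continuousAt.eventually_lt
          continuousAt_const h] with m' hm'
        exact ⟨fun _ => h, fun _ => hm'⟩
      · filter_upwards [continuousAt_const.eventually_lt
          (continuous_somBnd (j + 1)).continuousAt h] with m' hm'
        exact ⟨fun h' => absurd h' hm'.not_gt, fun h' => absurd h' h.not_gt⟩
    have h4 : (fun m' : Fin n → ℝ => Λ (Nat.dist i.1 (cw m x)) * (m' i - x))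
        =ᶠ[𝓝 m] fun m' => HH Λ m' x i := by
      filter_upwards [h3] with m' hm'
      have : cw m' x = cw m x := by
        unfold cw
        rw [Finset.filter_congr hm']
      unfold HH
      rw [this]
    refine ContinuousAt.congr ?_ h4
    exact (continuous_const.mul ((continuous_apply i).sub continuous_const)).continuousAt


lemma hf_lip [IsProbabilityMeasure μ] (hμ : ∀ᵐ x ∂μ, x ∈ Set.Ioo (0 : ℝ) 1)
    (hΛr : ∀ k, Λ k ∈ Set.Icc (0 : ℝ) 1) (hΛanti : Antitone Λ) {m m' : Fin n → ℝ} (hm : Monotone m) (hm' : Monotone m')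
    (h : m ≤ m') (i : Fin n) :
    hf Λ μ m' i - hf Λ μ m i ≤ 2 * (m' i - m i) := by
  unfold hf
  rw [← integral_sub (integrable_HH hμ hΛr m' i) (integrable_HH hμ hΛr m i)]
  calc _ ≤ ∫ x, 2 * (m' i - m i) ∂μ := by
        apply integral_mono ((integrable_HH hμ hΛr m' i).sub (integrable_HH hμ hΛr m i))
          (integrable_const _)
        intro x
        exact HH_lip hΛanti hΛr hm hm' h x i
    _ = _ := by simp

lemma hf_gap [IsProbabilityMeasure μ] (hμ : ∀ᵐ x ∂μ, x ∈ Set.Ioo (0 : ℝ) 1)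
    (hΛr : ∀ k, Λ k ∈ Set.Icc (0 : ℝ) 1) (hΛanti : Antitone Λ) {m : Fin n → ℝ} (hm : Monotone m) {i j : Fin n} (hij : i ≤ j) :
    hf Λ μ m j - hf Λ μ m i ≤ m j - m i := by
  unfold hf
  rw [← integral_sub (integrable_HH hμ hΛr m j) (integrable_HH hμ hΛr m i)]
  calc _ ≤ ∫ x, (m j - m i) ∂μ := by
        apply integral_mono ((integrable_HH hμ hΛr m j).sub (integrable_HH hμ hΛr m i))
          (integrable_const _)
        intro x
        exact HH_gap hΛanti hΛr hm x hij
    _ = _ := by simp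

lemma hf_le [IsProbabilityMeasure μ] (hμ : ∀ᵐ x ∂μ, x ∈ Set.Ioo (0 : ℝ) 1)
    (hΛr : ∀ k, Λ k ∈ Set.Icc (0 : ℝ) 1) {m : Fin n → ℝ} {i : Fin n} (h0 : 0 ≤ m i) : hf Λ μ m i ≤ m i := by
  unfold hf
  calc _ ≤ ∫ x, (m i) ∂μ := by
        apply integral_mono_ae (integrable_HH hμ hΛr m i) (integrable_const _)
        filter_upwards [hμ] with x hx
        exact HH_le hΛr h0 hx.1.le
    _ = _ := by simp

lemma hf_ge [IsProbabilityMeasure μ] (hμ : ∀ᵐ x ∂μ, x ∈ Set.Ioo (0 : ℝ) 1)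
    (hΛr : ∀ k, Λ k ∈ Set.Icc (0 : ℝ) 1) {m : Fin n → ℝ} {i : Fin n} (h0 : m i ≤ 1) : - hf Λ μ m i ≤ 1 - m i := by
  unfold hf
  rw [← integral_neg]
  calc _ ≤ ∫ x, (1 - m i) ∂μ := by
        apply integral_mono_ae (integrable_HH hμ hΛr m i).neg (integrable_const _)
        filter_upwards [hμ] with x hx
        exact HH_ge hΛr h0 hx.2.le
    _ = _ := by simp



end measure


section zeros
variable {n : ℕ} {Λ : ℕ → ℝ} {μ : Measure ℝ}

lemma exists_mem_cell (hpos : ∀ a b : ℝ, 0 ≤ a → a < b → b ≤ 1 → μ (Set.Ioo a b) ≠ 0)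
    {p : ℝ → Prop} (hp : ∀ᵐ x ∂μ, p x) {m : Fin n → ℝ} (hm : m ∈ KK n) {k : ℕ} (hk : k < n)
    (hc : somBnd m k < somBnd m (k + 1)) : ∃ x, x ∈ Set.Ioo (0 : ℝ) 1 ∧ cw m x = k ∧ p x := by
  have hmono := somBnd_monotone hm
  have h0 : 0 ≤ somBnd m k := by
    have := hmono (Nat.zero_le k)
    simpa [somBnd] using this
  have h1 : somBnd m (k + 1) ≤ 1 := by
    have := hmono (show k + 1 ≤ n by omega)
    have h2 : somBnd m n = 1 := by simp [somBnd]; omega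
    rwa [h2] at this
  have h3 : ∃ x ∈ Set.Ioo (somBnd m k) (somBnd m (k + 1)), p x := by
    by_contra hcon
    push Not at hcon
    apply hpos _ _ h0 hc h1
    refine measure_mono_null ?_ (ae_iff.1 hp)
    intro x hx
    exact hcon x hx
  obtain ⟨x, hx, hpx⟩ := h3
  have hx01 : x ∈ Set.Ioo (0 : ℝ) 1 := ⟨h0.trans_lt hx.1, hx.2.trans_le h1⟩
  exact ⟨x, hx01, (cw_eq_iff (by omega) hmono hx01 k hk).2 ⟨hx.1, hx.2.le⟩, hpx⟩

lemma tie_eq [IsProbabilityMeasure μ] [NullSingletonClass μ]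
    (hμ : ∀ᵐ x ∂μ, x ∈ Set.Ioo (0 : ℝ) 1)
    (hpos : ∀ a b : ℝ, 0 ≤ a → a < b → b ≤ 1 → μ (Set.Ioo a b) ≠ 0)
    (hΛr : ∀ k, Λ k ∈ Set.Icc (0 : ℝ) 1) (hΛanti : Antitone Λ)
    {m : Fin n → ℝ} (hm : m ∈ KK n) (hz : ∀ i, hf Λ μ m i = 0) {i j : Fin n} (hij : i ≤ j)
    (he : m i = m j) {k : Fin n} (hc : somBnd m k.1 < somBnd m (k.1 + 1)) :
    Λ (Nat.dist i.1 k.1) = Λ (Nat.dist j.1 k.1) := by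
  have hint := (integrable_HH hμ hΛr m i).sub (integrable_HH hμ hΛr m j)
  have h0 : ∫ x, (HH Λ m x i - HH Λ m x j) ∂μ = 0 := by
    rw [integral_sub (integrable_HH hμ hΛr m i) (integrable_HH hμ hΛr m j)]
    have h1 := hz i
    have h2 := hz j
    unfold hf at h1 h2
    rw [h1, h2, sub_zero]
  have h1 := (integral_eq_zero_iff_of_nonneg (f := fun x => HH Λ m x i - HH Λ m x j) (fun x => by
    have := HH_tie hΛanti hm.1 x hij he
    simpa using this) hint).1 h0
  have h2 : ∀ᵐ x ∂μ, x ≠ m i := by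
    have := (measure_singleton (μ := μ) (m i))
    rw [ae_iff]
    convert this using 2
    ext x
    simp
  obtain ⟨x, hx, hcw, h3, h4⟩ := exists_mem_cell hpos (h1.and h2) hm k.2 hc
  simp only [Pi.zero_apply, HH, hcw, ← he] at h3
  have h5 : m i - x ≠ 0 := sub_ne_zero.2 (Ne.symm h4)
  exact mul_right_cancel₀ h5 (sub_eq_zero.1 h3)

lemma bnd_le_self {m : Fin n → ℝ} (hm : m ∈ KK n) (k : Fin n) : somBnd m k.1 ≤ m k := by
  obtain ⟨k, hk⟩ := k
  rcases Nat.eq_zero_or_pos k with rfl | h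
  · simpa [somBnd] using (hm.2 ⟨0, hk⟩).1
  · obtain ⟨k, rfl⟩ : ∃ j, k = j + 1 := ⟨k - 1, by omega⟩
    show somBnd m (k + 1) ≤ _
    rw [somBnd_mid m k hk]
    have h2 : m ⟨k, by omega⟩ ≤ m ⟨k + 1, by omega⟩ := hm.1 (by rw [Fin.le_def]; simp)
    linarith

lemma self_le_bnd {m : Fin n → ℝ} (hm : m ∈ KK n) (k : Fin n) : m k ≤ somBnd m (k.1 + 1) := by
  obtain ⟨k, hk⟩ := k
  show _ ≤ somBnd m (k + 1)
  rcases lt_or_ge (k + 1) n with h | h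
  · rw [somBnd_mid m k h]
    have h2 : m ⟨k, by omega⟩ ≤ m ⟨k + 1, by omega⟩ := hm.1 (by rw [Fin.le_def]; simp)
    linarith
  · have : somBnd m (k + 1) = 1 := by simp [somBnd]; omega
    rw [this]
    exact (hm.2 _).2

/-- first index of a block with positive value : nontrivial left part of the cell -/
lemma bnd_lt_self {m : Fin n → ℝ} (k : Fin n) (h0 : 0 < m k)
    (hk : ∀ t, t < k → m t < m k) : somBnd m k.1 < m k := by
  obtain ⟨k, hkn⟩ := k
  rcases Nat.eq_zero_or_pos k with rfl | h
  · simpa [somBnd] using h0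
  · obtain ⟨k, rfl⟩ : ∃ j, k = j + 1 := ⟨k - 1, by omega⟩
    show somBnd m (k + 1) < _
    rw [somBnd_mid m k hkn]
    have h2 : m ⟨k, by omega⟩ < m ⟨k + 1, by omega⟩ := hk _ (by rw [Fin.lt_def]; simp)
    linarith

lemma self_lt_bnd {m : Fin n → ℝ} (k : Fin n) (h1 : m k < 1)
    (hk : ∀ t, k < t → m k < m t) : m k < somBnd m (k.1 + 1) := by
  obtain ⟨k, hkn⟩ := k
  show _ < somBnd m (k + 1)
  rcases lt_or_ge (k + 1) n with h | h
  · rw [somBnd_mid m k h]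
    have h2 : m ⟨k, by omega⟩ < m ⟨k + 1, by omega⟩ := hk _ (by rw [Fin.lt_def]; simp)
    linarith
  · have : somBnd m (k + 1) = 1 := by simp [somBnd]; omega
    rw [this]
    exact h1

lemma block_first {m : Fin n → ℝ} (hm : Monotone m) (i : Fin n) :
    ∃ p, p ≤ i ∧ m p = m i ∧ ∀ t, t < p → m t < m p := by
  obtain ⟨p, hp, hmin⟩ := Finset.exists_min_image (Finset.univ.filter fun t => m t = m i) id
    ⟨i, by simp⟩
  simp only [Finset.mem_filter, Finset.mem_univ, true_and, id] at hp hmin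
  refine ⟨p, hmin i rfl, hp, fun t ht => lt_of_le_of_ne (hm ht.le) fun h => ?_⟩
  exact absurd (hmin t (h.trans hp)) (not_le.2 ht)

lemma block_last {m : Fin n → ℝ} (hm : Monotone m) (i : Fin n) :
    ∃ q, i ≤ q ∧ m q = m i ∧ ∀ t, q < t → m q < m t := by
  obtain ⟨p, hp, hmin⟩ := Finset.exists_max_image (Finset.univ.filter fun t => m t = m i) id
    ⟨i, by simp⟩
  simp only [Finset.mem_filter, Finset.mem_univ, true_and, id] at hp hmin
  refine ⟨p, hmin i rfl, hp, fun t ht => lt_of_le_of_ne (hm ht.le) fun h => ?_⟩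
  exact absurd (hmin t (h.symm.trans hp)) (not_le.2 ht)

lemma field_zero_pos [IsProbabilityMeasure μ]
    (hμ : ∀ᵐ x ∂μ, x ∈ Set.Ioo (0 : ℝ) 1)
    (hpos : ∀ a b : ℝ, 0 ≤ a → a < b → b ≤ 1 → μ (Set.Ioo a b) ≠ 0)
    (hΛr : ∀ k, Λ k ∈ Set.Icc (0 : ℝ) 1) (hΛ0 : Λ 0 = 1)
    {m : Fin n → ℝ} (hm : m ∈ KK n) (hz : ∀ i, hf Λ μ m i = 0) (i : Fin n) : 0 < m i := by
  rcases (hm.2 i).1.lt_or_eq with h | h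
  · exact h
  exfalso
  obtain ⟨q, hq, he, hlast⟩ := block_last hm.1 i
  have hq0 : m q = 0 := he.trans h.symm
  have h1 : somBnd m q.1 < somBnd m (q.1 + 1) :=
    (bnd_le_self hm q).trans_lt (self_lt_bnd q (by rw [hq0]; norm_num) hlast)
  have h0 : ∫ x, - HH Λ m x q ∂μ = 0 := by
    rw [integral_neg]
    have := hz q
    unfold hf at this
    rw [this, neg_zero]
  have h2 := (integral_eq_zero_iff_of_nonneg_ae (f := fun x => - HH Λ m x q) (by
    filter_upwards [hμ] with x hx
    have := HH_le hΛr (hm.2 q).1 hx.1.le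
    simp only [Pi.zero_apply]
    linarith) (integrable_HH hμ hΛr m q).neg).1 h0
  obtain ⟨x, hx, hcw, h3⟩ := exists_mem_cell hpos h2 hm q.2 h1
  simp only [Pi.zero_apply, HH, hcw, Nat.dist_self, hΛ0, hq0] at h3
  linarith [hx.1]

lemma field_zero_lt_one [IsProbabilityMeasure μ]
    (hμ : ∀ᵐ x ∂μ, x ∈ Set.Ioo (0 : ℝ) 1)
    (hpos : ∀ a b : ℝ, 0 ≤ a → a < b → b ≤ 1 → μ (Set.Ioo a b) ≠ 0)
    (hΛr : ∀ k, Λ k ∈ Set.Icc (0 : ℝ) 1) (hΛ0 : Λ 0 = 1)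
    {m : Fin n → ℝ} (hm : m ∈ KK n) (hz : ∀ i, hf Λ μ m i = 0) (i : Fin n) : m i < 1 := by
  rcases (hm.2 i).2.lt_or_eq with h | h
  · exact h
  exfalso
  obtain ⟨q, hq, he, hlast⟩ := block_first hm.1 i
  have hq0 : m q = 1 := he.trans h
  have h1 : somBnd m q.1 < somBnd m (q.1 + 1) :=
    (bnd_lt_self q (by rw [hq0]; norm_num) hlast).trans_le (self_le_bnd hm q)
  have h0 : ∫ x, HH Λ m x q ∂μ = 0 := hz q
  have h2 := (integral_eq_zero_iff_of_nonneg_ae (f := fun x => HH Λ m x q) (by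
    filter_upwards [hμ] with x hx
    have := HH_ge hΛr (hm.2 q).2 hx.2.le
    simp only [Pi.zero_apply]
    linarith) (integrable_HH hμ hΛr m q)).1 h0
  obtain ⟨x, hx, hcw, h3⟩ := exists_mem_cell hpos h2 hm q.2 h1
  simp only [Pi.zero_apply, HH, hcw, Nat.dist_self, hΛ0, hq0] at h3
  linarith [hx.2]

lemma zero_Fplus [IsProbabilityMeasure μ] [NullSingletonClass μ]
    (hμ : ∀ᵐ x ∂μ, x ∈ Set.Ioo (0 : ℝ) 1)
    (hpos : ∀ a b : ℝ, 0 ≤ a → a < b → b ≤ 1 → μ (Set.Ioo a b) ≠ 0)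
    (hΛr : ∀ k, Λ k ∈ Set.Icc (0 : ℝ) 1) (hΛ0 : Λ 0 = 1) (hΛanti : Antitone Λ)
    (hHΛ : HLambda n Λ)
    {m : Fin n → ℝ} (hm : m ∈ KK n) (hz : ∀ i, hf Λ μ m i = 0) : m ∈ Fplus n := by
  have hp := field_zero_pos hμ hpos hΛr hΛ0 hm hz
  have hl := field_zero_lt_one hμ hpos hΛr hΛ0 hm hz
  refine ⟨?_, fun i => ⟨hp i, hl i⟩⟩
  apply hm.1.strictMono_of_injective
  by_contra hinj
  obtain ⟨p, q, hpq, heq, hpf, hql⟩ : ∃ p q : Fin n, p < q ∧ m p = m q ∧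
      (∀ t, t < p → m t < m p) ∧ (∀ t, q < t → m q < m t) := by
    have : ∃ i j : Fin n, i < j ∧ m i = m j := by
      unfold Function.Injective at hinj
      push Not at hinj
      obtain ⟨i, j, h1, h2⟩ := hinj
      rcases lt_or_gt_of_ne h2 with h | h
      · exact ⟨i, j, h, h1⟩
      · exact ⟨j, i, h, h1.symm⟩
    obtain ⟨i, j, hij, he⟩ := this
    obtain ⟨p, h1, h2, h3⟩ := block_first hm.1 i
    obtain ⟨q, h4, h5, h6⟩ := block_last hm.1 j
    exact ⟨p, q, h1.trans_lt (hij.trans_le h4), by rw [h2, h5, he], h3, h6⟩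
  have cellF : ∀ k : Fin n, (∀ t, t < k → m t < m k) → somBnd m k.1 < somBnd m (k.1 + 1) :=
    fun k hk => (bnd_lt_self k (hp k) hk).trans_le (self_le_bnd hm k)
  have cellL : ∀ k : Fin n, (∀ t, k < t → m k < m t) → somBnd m k.1 < somBnd m (k.1 + 1) :=
    fun k hk => (bnd_le_self hm k).trans_lt (self_lt_bnd k (hl k) hk)
  have E : ∀ {i j : Fin n}, i ≤ j → m i = m j → ∀ {k : Fin n},
      somBnd m k.1 < somBnd m (k.1 + 1) → Λ (Nat.dist i.1 k.1) = Λ (Nat.dist j.1 k.1) :=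
    fun hij he _ hc => tie_eq hμ hpos hΛr hΛanti hm hz hij he hc
  have hpq' : p.1 < q.1 := hpq
  have hone : ∀ {a b : ℕ}, a ≤ b → Λ b = 1 → Λ a = 1 := fun hab hb =>
    le_antisymm (hΛr _).2 (hb ▸ hΛanti hab)
  have base : Λ (q.1 - p.1) = 1 := by
    have := E hpq.le heq (cellF p hpf)
    rw [Nat.dist_self, hΛ0] at this
    rw [this]
    congr 1
    unfold Nat.dist
    omega
  have hdown : ∀ d, d ≤ q.1 → Λ d = 1 := by
    intro d
    induction d using Nat.strong_induction_on with
    | _ d ih =>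
      intro hd
      have hqn := q.2
      set i : Fin n := ⟨q.1 - d, by omega⟩ with hi
      have hiv : i.1 = q.1 - d := rfl
      rcases le_or_gt p i with h | h
      · have h' : p.1 ≤ i.1 := h
        exact hone (by omega) base
      · have h' : i.1 < p.1 := h
        obtain ⟨p', hp1, hp2, hp3⟩ := block_first hm.1 i
        obtain ⟨q', hq1, hq2, hq3⟩ := block_last hm.1 i
        have hq'p : q' < p := by
          by_contra hcon
          have := hm.1 (not_lt.1 hcon)
          have := hpf i h
          linarith
        have e1 : q'.1 < p.1 := hq'p
        have e2 : p'.1 ≤ i.1 := hp1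
        have e3 : i.1 ≤ q'.1 := hq1
        have A1 := E hpq.le heq (cellF p' hp3)
        have A2 := E (hp1.trans hq1) (hp2.trans hq2.symm) (cellF p hpf)
        have A3 := ih (q.1 - q'.1 - 1) (by omega) (by omega)
        have A4 : Λ (Nat.dist q'.1 p.1) = 1 := hone (by unfold Nat.dist; omega) A3
        rw [A4, Nat.dist_comm] at A2
        rw [A2] at A1
        exact hone (by unfold Nat.dist; omega) A1.symm
  have hup : ∀ d, d ≤ n - 1 - p.1 → Λ d = 1 := by
    intro d
    induction d using Nat.strong_induction_on with
    | _ d ih =>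
      intro hd
      have hqn := q.2
      set i : Fin n := ⟨p.1 + d, by omega⟩ with hi
      have hiv : i.1 = p.1 + d := rfl
      rcases le_or_gt i q with h | h
      · have h' : i.1 ≤ q.1 := h
        exact hone (by omega) base
      · have h' : q.1 < i.1 := h
        obtain ⟨p', hp1, hp2, hp3⟩ := block_first hm.1 i
        obtain ⟨q', hq1, hq2, hq3⟩ := block_last hm.1 i
        have hq'p : q < p' := by
          by_contra hcon
          have := hm.1 (not_lt.1 hcon)
          have := hql i h
          linarith
        have e1 : q.1 < p'.1 := hq'p
        have e2 : p'.1 ≤ i.1 := hp1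
        have e3 : i.1 ≤ q'.1 := hq1
        have A1 := E hpq.le heq (cellL q' hq3)
        have A2 := E (hp1.trans hq1) (hp2.trans hq2.symm) (cellL q hql)
        have A3 := ih (p'.1 - 1 - p.1) (by omega) (by omega)
        have A4 : Λ (Nat.dist p'.1 q.1) = 1 := hone (by unfold Nat.dist; omega) A3
        rw [A4, Nat.dist_comm] at A2
        rw [← A2] at A1
        exact hone (by unfold Nat.dist; omega) A1
  obtain ⟨k₀, hk, hlt⟩ := hHΛ
  have hqn := q.2
  have : Λ (k₀ + 1) = 1 := by
    rcases le_or_gt (k₀ + 1) q.1 with h | h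
    · exact hdown _ h
    · exact hup _ (by omega)
  linarith [(hΛr k₀).2]

end zeros


section density
variable {n : ℕ} {Λ : ℕ → ℝ} {μ : Measure ℝ} {f : ℝ → ℝ}

lemma Hmu.measurable (h : Hmu f) (hsupp : ∀ x, x ∉ Set.Icc (0 : ℝ) 1 → f x = 0) :
    Measurable f := by
  have hconc : ConcaveOn ℝ (Set.Ioo (0 : ℝ) 1) (fun x => Real.log (f x)) := by
    rcases h.2 with h2 | h2
    · exact h2.concaveOn
    · exact h2.1
  have hcont := hconc.continuousOn isOpen_Ioo
  have hc2 : ContinuousOn f (Set.Ioo (0 : ℝ) 1) := by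
    have h3 : ContinuousOn (fun x => Real.exp (Real.log (f x))) (Set.Ioo (0 : ℝ) 1) :=
      Real.continuous_exp.comp_continuousOn hcont
    refine h3.congr fun x hx => ?_
    exact (Real.exp_log (h.1 x hx)).symm
  have h4 : Measurable ((Set.Ioo (0 : ℝ) 1).indicator f) := by
    have := hc2.measurable_piecewise (g := fun _ => (0 : ℝ)) continuousOn_const measurableSet_Ioo
    rw [← Set.piecewise_eq_indicator]
    exact this
  have h5 : f = fun x => if x = 0 then f 0 else if x = 1 then f 1 else
      (Set.Ioo (0 : ℝ) 1).indicator f x := by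
    funext x
    split_ifs with h0 h1
    · rw [h0]
    · rw [h1]
    · by_cases hx : x ∈ Set.Ioo (0 : ℝ) 1
      · rw [Set.indicator_of_mem hx]
      · rw [Set.indicator_of_notMem hx]
        apply hsupp
        intro hx'
        exact hx ⟨lt_of_le_of_ne hx'.1 (Ne.symm h0), lt_of_le_of_ne hx'.2 h1⟩
  rw [h5]
  exact Measurable.ite (measurableSet_singleton 0) measurable_const
    (Measurable.ite (measurableSet_singleton 1) measurable_const h4)

lemma dens_ae (hdens : μ = volume.withDensity fun x => ENNReal.ofReal (f x))
    (hsupp : ∀ x, x ∉ Set.Icc (0 : ℝ) 1 → f x = 0) :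
    ∀ᵐ x ∂μ, x ∈ Set.Ioo (0 : ℝ) 1 := by
  have hac : μ ≪ volume := by
    rw [hdens]
    exact withDensity_absolutelyContinuous _ _
  have h1 : μ (Set.Icc 0 1)ᶜ = 0 := by
    rw [hdens, withDensity_apply _ measurableSet_Icc.compl]
    rw [setLIntegral_congr_fun (g := fun _ => 0) measurableSet_Icc.compl]
    · simp
    · intro x hx
      simp [hsupp x hx]
  have h2 : μ {0, 1} = 0 := hac (((Set.finite_singleton (1 : ℝ)).insert 0).measure_zero volume)
  rw [ae_iff]
  refine measure_mono_null ?_ (measure_union_null h1 h2)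
  intro x hx
  by_cases h : x ∈ Set.Icc (0 : ℝ) 1
  · right
    simp only [Set.mem_ofPred_eq, Set.mem_Ioo, not_and_or, not_lt] at hx
    rcases hx with hx | hx
    · left; exact le_antisymm hx h.1
    · right; exact le_antisymm h.2 hx
  · left; exact h

lemma dens_null (hdens : μ = volume.withDensity fun x => ENNReal.ofReal (f x)) :
    NullSingletonClass μ := by
  have hac : μ ≪ volume := by
    rw [hdens]
    exact withDensity_absolutelyContinuous _ _
  exact ⟨fun x => hac (by simp)⟩

lemma dens_pos (hdens : μ = volume.withDensity fun x => ENNReal.ofReal (f x))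
    (hfm : Measurable f) (hfp : ∀ x ∈ Set.Ioo (0 : ℝ) 1, 0 < f x) (a b : ℝ) (ha : 0 ≤ a)
    (hab : a < b) (hb : b ≤ 1) : μ (Set.Ioo a b) ≠ 0 := by
  rw [hdens]
  intro h
  rw [withDensity_apply_eq_zero hfm.ennreal_ofReal] at h
  have h2 : Set.Ioo a b ⊆ {x | ENNReal.ofReal (f x) ≠ 0} ∩ Set.Ioo a b := by
    intro x hx
    refine ⟨?_, hx⟩
    have := hfp x ⟨ha.trans_lt hx.1, hx.2.trans_le hb⟩
    simpa using this
  have h3 := measure_mono_null h2 h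
  simp at h3
  linarith

lemma meanField_eq [IsProbabilityMeasure μ] (hn : 0 < n)
    (hdens : μ = volume.withDensity fun x => ENNReal.ofReal (f x))
    (hsupp : ∀ x, x ∉ Set.Icc (0 : ℝ) 1 → f x = 0)
    (hfm : Measurable f) (hfp : ∀ x ∈ Set.Ioo (0 : ℝ) 1, 0 < f x)
    {m : Fin n → ℝ} (hm : m ∈ KK n) (i : Fin n) : meanField Λ f m i = hf Λ μ m i := by
  have hμ := dens_ae hdens hsupp
  have := dens_null hdens
  have hmono := somBnd_monotone hm
  have hfae : ∀ᵐ x, 0 ≤ f x := by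
    have : ∀ᵐ x : ℝ, x ∉ ({0, 1} : Set ℝ) := by
      have h : volume ({0, 1} : Set ℝ) = 0 := ((Set.finite_singleton (1 : ℝ)).insert 0).measure_zero volume
      exact compl_mem_ae_iff.2 h
    filter_upwards [this] with x hx
    by_cases hx' : x ∈ Set.Icc (0 : ℝ) 1
    · refine (hfp x ⟨lt_of_le_of_ne hx'.1 fun h => hx (by simp [← h]),
        lt_of_le_of_ne hx'.2 fun h => hx (by simp [h])⟩).le
    · exact (hsupp x hx').ge
  have hset : ∀ j : Fin n, ∫ x in Set.Icc (somBnd m j.1) (somBnd m (j.1 + 1)), (m i - x) * f x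
      = ∫ x in Set.Icc (somBnd m j.1) (somBnd m (j.1 + 1)), (m i - x) ∂μ := by
    intro j
    rw [hdens, setIntegral_withDensity_eq_setIntegral_toReal_smul hfm.ennreal_ofReal
      (Eventually.of_forall fun x => ENNReal.ofReal_lt_top) _ measurableSet_Icc]
    apply integral_congr_ae
    filter_upwards [ae_restrict_of_ae hfae] with x hx
    rw [ENNReal.toReal_ofReal hx, smul_eq_mul, mul_comm]
  have hint : Integrable (fun x => m i - x) μ := by
    refine Integrable.of_bound (by fun_prop) (|m i| + 1) ?_
    filter_upwards [hμ] with x hx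
    refine (abs_sub _ _).trans ?_
    rw [abs_of_pos hx.1]
    linarith [hx.2]
  unfold meanField hf
  simp only [hset]
  simp only [← integral_indicator measurableSet_Icc, ← integral_const_mul]
  rw [← integral_finsetSum]
  · apply integral_congr_ae
    have h2 : ∀ᵐ x ∂μ, ∀ j ∈ Finset.range (n + 1), x ≠ somBnd m j := by
      rw [Finset.eventually_all]
      intro j _
      have := (measure_singleton (μ := μ) (somBnd m j))
      rw [ae_iff]
      convert this using 2
      ext x
      simp
    filter_upwards [hμ, h2] with x hx hxb
    have hc := cw_lt hn m x
    have hcs := (cw_eq_iff hn hmono hx (cw m x) hc).1 rfl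
    rw [Finset.sum_eq_single ⟨cw m x, hc⟩]
    · rw [Set.indicator_of_mem (Set.mem_Icc.2 ⟨hcs.1.le, hcs.2⟩)]
      rfl
    · intro j _ hj
      rw [Set.indicator_of_notMem, mul_zero]
      intro hxj
      apply hj
      have h3 : somBnd m j.1 < x := lt_of_le_of_ne hxj.1
        (Ne.symm (hxb j.1 (by have := j.2; simp)))
      have := (cw_eq_iff hn hmono hx j.1 j.2).2 ⟨h3, hxj.2⟩
      exact Fin.ext this.symm
    · simp
  · intro j _
    exact (hint.indicator measurableSet_Icc).const_mul _

end density


section abstractConv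
variable {n : ℕ}

lemma isClosed_KK : IsClosed (KK n) := by
  have : KK n = (⋂ (i : Fin n) (j : Fin n) (_ : i ≤ j), {m : Fin n → ℝ | m i ≤ m j}) ∩
      ⋂ i : Fin n, {m : Fin n → ℝ | m i ∈ Set.Icc (0 : ℝ) 1} := by
    ext m
    simp only [KK, Monotone, Set.mem_inter_iff, Set.mem_iInter, Set.mem_ofPred_eq]
  rw [this]
  refine IsClosed.inter ?_ ?_
  · refine isClosed_iInter fun i => isClosed_iInter fun j => isClosed_iInter fun _ => ?_
    exact isClosed_le (continuous_apply i) (continuous_apply j)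
  · exact isClosed_iInter fun i => isClosed_Icc.preimage (continuous_apply i)

/-- The order-theoretic properties of the mean field that drive the convergence proof. -/
structure GoodField (h : (Fin n → ℝ) → Fin n → ℝ) (s : Fin n → ℝ) : Prop where
  cont : ∀ i, Continuous (fun m => h m i)
  lip : ∀ m m', m ∈ KK n → m' ∈ KK n → m ≤ m' → ∀ i, h m' i - h m i ≤ 2 * (m' i - m i)
  gap : ∀ m, m ∈ KK n → ∀ i j, i ≤ j → h m j - h m i ≤ m j - m i
  lo : ∀ m, m ∈ KK n → ∀ i, h m i ≤ m i
  hi : ∀ m, m ∈ KK n → ∀ i, - h m i ≤ 1 - m i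
  uniq : ∀ m, m ∈ KK n → (∀ i, h m i = 0) → m = s

variable {h : (Fin n → ℝ) → Fin n → ℝ} {s : Fin n → ℝ}

/-- The averaged half step. -/
def halfStep (h : (Fin n → ℝ) → Fin n → ℝ) (m : Fin n → ℝ) : Fin n → ℝ :=
  fun i => m i - 1 / 2 * h m i

lemma GoodField.step_mem (H : GoodField h s) {m : Fin n → ℝ} (hm : m ∈ KK n) :
    halfStep h m ∈ KK n :=
  step_KK hm (by norm_num) (by norm_num) (H.gap m hm) (H.lo m hm) (H.hi m hm)

lemma GoodField.step_mono (H : GoodField h s) {m m' : Fin n → ℝ} (hm : m ∈ KK n)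
    (hm' : m' ∈ KK n) (hle : m ≤ m') : halfStep h m ≤ halfStep h m' := by
  intro i
  have := H.lip m m' hm hm' hle i
  simp only [halfStep]
  linarith

lemma GoodField.iter_mem (H : GoodField h s) {a : Fin n → ℝ} (ha : a ∈ KK n) (k : ℕ) :
    (halfStep h)^[k] a ∈ KK n := by
  induction k with
  | zero => exact ha
  | succ k ih =>
    rw [Function.iterate_succ_apply']
    exact H.step_mem ih

lemma GoodField.limit_eq (H : GoodField h s) {a p : Fin n → ℝ} (ha : a ∈ KK n)
    (hp : Tendsto (fun k => (halfStep h)^[k] a) atTop (𝓝 p)) : p = s := by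
  have hpK : p ∈ KK n := isClosed_KK.mem_of_tendsto hp (Eventually.of_forall (H.iter_mem ha))
  apply H.uniq p hpK
  have hc : Continuous (halfStep h) :=
    continuous_pi fun i => (continuous_apply i).sub (continuous_const.mul (H.cont i))
  have h1 : Tendsto (fun k => (halfStep h)^[k + 1] a) atTop (𝓝 (halfStep h p)) := by
    simp only [Function.iterate_succ_apply']
    exact (hc.tendsto p).comp hp
  have h2 := tendsto_nhds_unique h1 (hp.comp (tendsto_add_atTop_nat 1))
  intro i
  have := congrFun h2 i
  simp only [halfStep] at this
  linarith

lemma GoodField.le_of_nonneg (H : GoodField h s) {a : Fin n → ℝ} (ha : a ∈ KK n)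
    (hnn : ∀ i, 0 ≤ h a i) : s ≤ a := by
  set u : ℕ → Fin n → ℝ := fun k => (halfStep h)^[k] a with hu
  have hanti : Antitone u := by
    apply antitone_nat_of_succ_le
    intro k
    induction k with
    | zero =>
      intro i
      have := hnn i
      simp only [hu, Function.iterate_one, Function.iterate_zero, id, halfStep, zero_add]
      linarith
    | succ k ih =>
      have := H.step_mono (H.iter_mem ha (k + 1)) (H.iter_mem ha k) ih
      simp only [hu, Function.iterate_succ_apply'] at this ⊢
      exact this
  have hlim : Tendsto u atTop (𝓝 fun i => ⨅ k, u k i) := by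
    rw [tendsto_pi_nhds]
    intro i
    apply tendsto_atTop_ciInf (fun k l hkl => hanti hkl i)
    exact ⟨0, by rintro _ ⟨k, rfl⟩; exact ((H.iter_mem ha k).2 i).1⟩
  have hs := H.limit_eq ha hlim
  rw [← hs]
  intro i
  have : ⨅ k, u k i ≤ u 0 i :=
    ciInf_le ⟨0, by rintro _ ⟨k, rfl⟩; exact ((H.iter_mem ha k).2 i).1⟩ 0
  exact this

lemma GoodField.ge_of_nonpos (H : GoodField h s) {a : Fin n → ℝ} (ha : a ∈ KK n)
    (hnn : ∀ i, h a i ≤ 0) : a ≤ s := by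
  set u : ℕ → Fin n → ℝ := fun k => (halfStep h)^[k] a with hu
  have hmono : Monotone u := by
    apply monotone_nat_of_le_succ
    intro k
    induction k with
    | zero =>
      intro i
      have := hnn i
      simp only [hu, Function.iterate_one, Function.iterate_zero, id, halfStep, zero_add]
      linarith
    | succ k ih =>
      have := H.step_mono (H.iter_mem ha k) (H.iter_mem ha (k + 1)) ih
      simp only [hu, Function.iterate_succ_apply'] at this ⊢
      exact this
  have hlim : Tendsto u atTop (𝓝 fun i => ⨆ k, u k i) := by
    rw [tendsto_pi_nhds]
    intro i
    apply tendsto_atTop_ciSup (fun k l hkl => hmono hkl i)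
    exact ⟨1, by rintro _ ⟨k, rfl⟩; exact ((H.iter_mem ha k).2 i).2⟩
  have hs := H.limit_eq ha hlim
  rw [← hs]
  intro i
  have : u 0 i ≤ ⨆ k, u k i :=
    le_ciSup (f := fun k => u k i) ⟨1, by rintro _ ⟨k, rfl⟩; exact ((H.iter_mem ha k).2 i).2⟩ 0
  exact this

lemma KK_inf {m m' : Fin n → ℝ} (hm : m ∈ KK n) (hm' : m' ∈ KK n) : m ⊓ m' ∈ KK n :=
  ⟨fun _ _ hij => inf_le_inf (hm.1 hij) (hm'.1 hij),
    fun i => ⟨le_inf (hm.2 i).1 (hm'.2 i).1, inf_le_left.trans (hm.2 i).2⟩⟩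

lemma KK_sup {m m' : Fin n → ℝ} (hm : m ∈ KK n) (hm' : m' ∈ KK n) : m ⊔ m' ∈ KK n :=
  ⟨fun _ _ hij => sup_le_sup (hm.1 hij) (hm'.1 hij),
    fun i => ⟨(hm.2 i).1.trans le_sup_left, sup_le (hm.2 i).2 (hm'.2 i).2⟩⟩

theorem GoodField.tendsto (H : GoodField h s) {T : Type*} {l : Filter T} [l.NeBot]
    {u : T → Fin n → ℝ} (hK : ∀ᶠ t in l, u t ∈ KK n)
    (hup : ∀ i a δ c, 0 < δ → 0 < c → (∀ᶠ t in l, u t i ≤ a + δ → h (u t) i ≤ -c) →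
      ∀ᶠ t in l, a + δ / 2 ≤ u t i)
    (hdn : ∀ i a δ c, 0 < δ → 0 < c → (∀ᶠ t in l, a - δ ≤ u t i → c ≤ h (u t) i) →
      ∀ᶠ t in l, u t i ≤ a - δ / 2) :
    Tendsto u l (𝓝 s) := by
  have hb1 : ∀ i, l.IsBoundedUnder (· ≤ ·) (fun t => u t i) := fun i =>
    ⟨1, by
      rw [eventually_map]
      filter_upwards [hK] with t ht
      exact (ht.2 i).2⟩
  have hb2 : ∀ i, l.IsBoundedUnder (· ≥ ·) (fun t => u t i) := fun i =>
    ⟨0, by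
      rw [eventually_map]
      filter_upwards [hK] with t ht
      exact (ht.2 i).1⟩
  have hc1 : ∀ i, l.IsCoboundedUnder (· ≥ ·) (fun t => u t i) := fun i =>
    (hb1 i).isCoboundedUnder_ge
  have hc2 : ∀ i, l.IsCoboundedUnder (· ≤ ·) (fun t => u t i) := fun i =>
    (hb2 i).isCoboundedUnder_le
  have hlow : ∀ i, s i ≤ liminf (fun t => u t i) l := by
    set a : Fin n → ℝ := fun i => liminf (fun t => u t i) l with ha
    have haK : a ∈ KK n := by
      refine ⟨fun i j hij => ?_, fun i => ⟨?_, ?_⟩⟩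
      · exact liminf_le_liminf (by filter_upwards [hK] with t ht using ht.1 hij) (hb2 i) (hc1 j)
      · exact le_liminf_of_le (hc1 i) (by filter_upwards [hK] with t ht using (ht.2 i).1)
      · exact liminf_le_of_le (hb2 i) (fun b hb => by
          obtain ⟨t, h1, h2⟩ := (hb.and hK).exists
          exact h1.trans (h2.2 i).2)
    apply H.le_of_nonneg haK
    intro i
    by_contra hneg
    push Not at hneg
    obtain ⟨δ₀, hδ₀, hball⟩ : ∃ δ₀ > 0, ∀ p, dist p a < δ₀ → h p i < h a i / 2 := by
      have := (H.cont i).continuousAt.eventually_lt (x₀ := a) continuousAt_const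
        (show h a i < h a i / 2 by linarith)
      exact Metric.eventually_nhds_iff.1 this
    set δ := min (δ₀ / 2) (- h a i / 16) with hδ
    have hδpos : 0 < δ := lt_min (by linarith) (by linarith)
    have hδ1 : δ < δ₀ := (min_le_left _ _).trans_lt (by linarith)
    have hδ2 : δ ≤ - h a i / 16 := min_le_right _ _
    have hev : ∀ᶠ t in l, ∀ j, a j - δ < u t j := by
      rw [eventually_all]
      intro j
      exact eventually_lt_of_lt_liminf (show a j - δ < liminf (fun t => u t j) l by
        simp only [ha]; linarith) (hb2 j)
    have key := hup i (a i) δ (- h a i / 4) hδpos (by linarith) (by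
      filter_upwards [hK, hev] with t ht hev hle
      have hp := KK_inf ht haK
      have h1 := H.lip _ _ hp ht inf_le_left i
      have h2 : h (u t ⊓ a) i < h a i / 2 := by
        apply hball
        rw [dist_pi_lt_iff hδ₀]
        intro j
        rw [Real.dist_eq, Pi.inf_apply, abs_lt]
        have := hev j
        constructor
        · have : a j - δ ≤ u t j ⊓ a j := le_inf (by linarith) (by linarith)
          linarith
        · have : u t j ⊓ a j ≤ a j := inf_le_right
          linarith
      have h3 : a i - δ ≤ (u t ⊓ a) i := le_inf (hev i).le (by linarith)
      linarith)
    have : a i + δ / 2 ≤ a i := le_liminf_of_le (hc1 i) key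
    linarith
  have hhigh : ∀ i, limsup (fun t => u t i) l ≤ s i := by
    set a : Fin n → ℝ := fun i => limsup (fun t => u t i) l with ha
    have haK : a ∈ KK n := by
      refine ⟨fun i j hij => ?_, fun i => ⟨?_, ?_⟩⟩
      · exact limsup_le_limsup (by filter_upwards [hK] with t ht using ht.1 hij) (hc2 i) (hb1 j)
      · exact le_limsup_of_le (hb1 i) (fun b hb => by
          obtain ⟨t, h1, h2⟩ := (hb.and hK).exists
          exact (h2.2 i).1.trans h1)
      · exact limsup_le_of_le (hc2 i) (by filter_upwards [hK] with t ht using (ht.2 i).2)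
    apply H.ge_of_nonpos haK
    intro i
    by_contra hneg
    push Not at hneg
    obtain ⟨δ₀, hδ₀, hball⟩ : ∃ δ₀ > 0, ∀ p, dist p a < δ₀ → h a i / 2 < h p i := by
      have := continuousAt_const.eventually_lt (x₀ := a) (H.cont i).continuousAt
        (show h a i / 2 < h a i by linarith)
      exact Metric.eventually_nhds_iff.1 this
    set δ := min (δ₀ / 2) (h a i / 16) with hδ
    have hδpos : 0 < δ := lt_min (by linarith) (by linarith)
    have hδ1 : δ < δ₀ := (min_le_left _ _).trans_lt (by linarith)
    have hδ2 : δ ≤ h a i / 16 := min_le_right _ _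
    have hev : ∀ᶠ t in l, ∀ j, u t j < a j + δ := by
      rw [eventually_all]
      intro j
      exact eventually_lt_of_limsup_lt (show limsup (fun t => u t j) l < a j + δ by
        simp only [ha]; linarith) (hb1 j)
    have key := hdn i (a i) δ (h a i / 4) hδpos (by linarith) (by
      filter_upwards [hK, hev] with t ht hev hle
      have hp := KK_sup ht haK
      have h1 := H.lip _ _ ht hp le_sup_left i
      have h2 : h a i / 2 < h (u t ⊔ a) i := by
        apply hball
        rw [dist_pi_lt_iff hδ₀]
        intro j
        rw [Real.dist_eq, Pi.sup_apply, abs_lt]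
        have := hev j
        constructor
        · have : a j ≤ u t j ⊔ a j := le_sup_right
          linarith
        · have : u t j ⊔ a j ≤ a j + δ := sup_le (by linarith) (by linarith)
          linarith
      have h3 : (u t ⊔ a) i ≤ a i + δ := sup_le (hev i).le (by linarith)
      linarith)
    have : a i ≤ a i - δ / 2 := limsup_le_of_le (hc2 i) key
    linarith
  rw [tendsto_pi_nhds]
  intro i
  exact tendsto_of_le_liminf_of_limsup_le (hlow i) (hhigh i) (hb1 i) (hb2 i)

end abstractConv

section scalar

lemma scalar_sa {y d e M : ℕ → ℝ} {L a δ c : ℝ} (hδ : 0 < δ) (hc : 0 < c)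
    (hy : ∀ t, y (t + 1) = y t + e t * d t + (M (t + 1) - M t))
    (hM : Tendsto M atTop (𝓝 L)) (he : ∀ t, 0 ≤ e t) (he0 : Tendsto e atTop (𝓝 0))
    (hediv : Tendsto (fun T => ∑ t ∈ Finset.range T, e t) atTop atTop)
    (hd : ∀ t, |d t| ≤ 1) (hev : ∀ᶠ t in atTop, y t ≤ a + δ → c ≤ d t) :
    ∀ᶠ t in atTop, a + δ / 2 ≤ y t := by
  have h1 : ∀ᶠ t in atTop, |M t - L| ≤ δ / 8 := by
    have := Metric.tendsto_nhds.1 hM (δ / 8) (by linarith)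
    filter_upwards [this] with t ht
    exact ht.le
  have h2 : ∀ᶠ t in atTop, e t ≤ δ / 8 := by
    filter_upwards [he0.eventually_lt_const (show 0 < δ / 8 by linarith)] with t ht using ht.le
  obtain ⟨T, hT⟩ := eventually_atTop.1 (h1.and (h2.and hev))
  have hz : ∀ t, y (t + 1) - M (t + 1) = y t - M t + e t * d t := fun t => by rw [hy t]; ring
  -- some time above
  obtain ⟨t₀, ht₀, hyt₀⟩ : ∃ t₀ ≥ T, a + δ < y t₀ := by
    by_contra hcon
    push Not at hcon
    have hgrow : ∀ k, y T - M T + c * (∑ t ∈ Finset.range (T + k), e t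
        - ∑ t ∈ Finset.range T, e t) ≤ y (T + k) - M (T + k) := by
      intro k
      induction k with
      | zero => simp
      | succ k ih =>
        rw [← add_assoc, hz, Finset.sum_range_succ]
        have h3 := (hT (T + k) (by omega)).2.2 (hcon _ (by omega))
        have h4 := mul_le_mul_of_nonneg_left h3 (he (T + k))
        linarith
    have h5 : ∀ᶠ k in atTop, (a + δ - (L - δ / 8) - (y T - M T)) / c
        + ∑ t ∈ Finset.range T, e t < ∑ t ∈ Finset.range k, e t :=
      hediv.eventually_gt_atTop _
    obtain ⟨k, hk1, hk2⟩ := (h5.and (eventually_ge_atTop T)).exists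
    obtain ⟨j, rfl⟩ := Nat.exists_eq_add_of_le hk2
    have h6 := hgrow j
    have h7 := hcon (T + j) (by omega)
    have h8 := (abs_le.1 (hT (T + j) (by omega)).1).1
    have h9 : (a + δ - (L - δ / 8) - (y T - M T)) / c <
        ∑ t ∈ Finset.range (T + j), e t - ∑ t ∈ Finset.range T, e t := by linarith
    rw [div_lt_iff₀ hc] at h9
    nlinarith
  have hinv : ∀ k, a + δ - L - δ / 4 ≤ y (t₀ + k) - M (t₀ + k) := by
    intro k
    induction k with
    | zero =>
      have := (abs_le.1 (hT t₀ ht₀).1).2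
      simp only [add_zero]
      linarith
    | succ k ih =>
      rw [← add_assoc, hz]
      obtain ⟨g1, g2, g3⟩ := hT (t₀ + k) (by omega)
      rcases le_or_gt (y (t₀ + k)) (a + δ) with h | h
      · have := mul_nonneg (he (t₀ + k)) (hc.le.trans (g3 h))
        linarith
      · have g4 := (abs_le.1 g1).2
        have g5 := (abs_le.1 (hd (t₀ + k))).1
        have g6 := mul_le_mul_of_nonneg_left g5 (he (t₀ + k))
        linarith
  filter_upwards [eventually_ge_atTop t₀] with t ht
  obtain ⟨k, rfl⟩ := Nat.exists_eq_add_of_le ht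
  have := hinv k
  have := (abs_le.1 (hT (t₀ + k) (by omega)).1).1
  linarith

lemma scalar_ode {y y' : ℝ → ℝ} {a δ c : ℝ} (hδ : 0 < δ) (hc : 0 < c)
    (hy : ∀ t, HasDerivAt y (y' t) t)
    (hev : ∀ᶠ t in atTop, y t ≤ a + δ → c ≤ y' t) :
    ∀ᶠ t in atTop, a + δ / 2 ≤ y t := by
  obtain ⟨T, hT⟩ := eventually_atTop.1 hev
  obtain ⟨t₀, ht₀, hyt₀⟩ : ∃ t₀ ≥ T, a + δ < y t₀ := by
    by_contra hcon
    push Not at hcon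
    have hcont : ContinuousOn y (Set.Ici T) := fun t _ => (hy t).continuousAt.continuousWithinAt
    have hmono : ∀ t ≥ T, c * (t - T) ≤ y t - y T := by
      intro t ht
      refine (convex_Ici T).mul_sub_le_image_sub_of_le_deriv hcont
        (fun x _ => (hy x).differentiableAt.differentiableWithinAt) ?_ T (by simp) t ht ht
      intro x hx
      rw [(hy x).deriv]
      have hx' : T ≤ x := interior_subset hx
      exact hT x hx' (hcon x hx')
    have hp : 0 ≤ a + δ - y T := by linarith [hcon T le_rfl]
    have h1 := hmono (T + ((a + δ - y T) / c + 1)) (by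
      have := div_nonneg hp hc.le
      linarith)
    have h2 := hcon (T + ((a + δ - y T) / c + 1)) (by
      have := div_nonneg hp hc.le
      linarith)
    have h3 : c * ((a + δ - y T) / c) = a + δ - y T := by field_simp
    nlinarith
  filter_upwards [eventually_ge_atTop t₀] with t ht
  have := image_le_of_deriv_right_lt_deriv_boundary (f := fun t => - y t) (f' := fun t => - y' t)
    (a := t₀) (b := t) (B := fun _ => -(a + δ)) (B' := fun _ => 0)
    (fun t _ => (hy t).neg.continuousAt.continuousWithinAt)
    (fun t _ => (hy t).neg.hasDerivWithinAt) (by show - y t₀ ≤ _; linarith)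
    (fun x => hasDerivAt_const x _) (fun x hx hxe => by
      have : y x = a + δ := by
        have h4 : - y x = -(a + δ) := hxe
        linarith
      have := hT x (ht₀.trans hx.1) this.le
      linarith) (show t ∈ Set.Icc t₀ t from ⟨ht, le_rfl⟩)
  have h5 : - y t ≤ -(a + δ) := this
  linarith

end scalar



section noise

variable {Ω : Type*} {mΩ : MeasurableSpace Ω} {P : Measure Ω} [IsProbabilityMeasure P]

/-- Convergence of a square-summable sum of bounded martingale increments. -/
lemma noise_conv (ℱ : Filtration ℕ mΩ) (Z : ℕ → Ω → ℝ) (B : ℝ)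
    (hZm : ∀ t, Measurable[ℱ (t + 1)] (Z t)) (hZb : ∀ t ω, |Z t ω| ≤ B)
    (hZ0 : ∀ t (g : Ω → ℝ), Measurable[ℱ t] g → (∃ C, ∀ ω, |g ω| ≤ C) →
      ∫ ω, g ω * Z t ω ∂P = 0)
    (e : ℕ → ℝ) (he : Summable fun t => e t ^ 2) :
    ∀ᵐ ω ∂P, ∃ L, Tendsto (fun T => ∑ t ∈ Finset.range T, e t * Z t ω) atTop (𝓝 L) := by
  set M : ℕ → Ω → ℝ := fun T ω => ∑ t ∈ Finset.range T, e t * Z t ω with hM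
  have hMs : ∀ T ω, M (T + 1) ω = M T ω + e T * Z T ω := fun T ω => by
    simp [hM, Finset.sum_range_succ]
  have hMm : ∀ T, Measurable[ℱ T] (M T) := by
    intro T
    refine Finset.measurable_fun_sum _ fun t ht => ?_
    have h1 : Measurable[ℱ T] (Z t) :=
      (hZm t).mono (ℱ.mono (Nat.succ_le_of_lt (Finset.mem_range.1 ht))) le_rfl
    exact h1.const_mul _
  have hMm' : ∀ T, Measurable (M T) := fun T => (hMm T).mono (ℱ.le T) le_rfl
  have hZm' : ∀ T, Measurable (Z T) := fun T => (hZm T).mono (ℱ.le _) le_rfl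
  have hMb : ∀ T, ∃ C, ∀ ω, |M T ω| ≤ C := by
    intro T
    refine ⟨∑ t ∈ Finset.range T, |e t| * B, fun ω => ?_⟩
    refine (Finset.abs_sum_le_sum_abs _ _).trans (Finset.sum_le_sum fun t _ => ?_)
    rw [abs_mul]
    exact mul_le_mul_of_nonneg_left (hZb t ω) (abs_nonneg _)
  have bint : ∀ (g : Ω → ℝ), Measurable g → (∃ C, ∀ ω, |g ω| ≤ C) → Integrable g P := by
    rintro g hg ⟨C, hC⟩
    exact Integrable.of_bound hg.aestronglyMeasurable C (Eventually.of_forall hC)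
  have hMi : ∀ T, Integrable (M T) P := fun T => bint _ (hMm' T) (hMb T)
  have hZi : ∀ T, Integrable (Z T) P := fun T => bint _ (hZm' T) ⟨B, hZb T⟩
  have hsub : Submartingale M ℱ P := by
    refine submartingale_of_setIntegral_le_succ (fun T => (hMm T).stronglyMeasurable) hMi ?_
    intro T s hs
    have hs' : MeasurableSet s := ℱ.le T s hs
    have h0 := hZ0 T (s.indicator fun _ => 1) (Measurable.indicator (@measurable_const ℝ Ω _ (ℱ T) 1) hs) ⟨1, fun ω => by
      by_cases h : ω ∈ s <;> simp [h]⟩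
    have h1 : ∫ ω in s, Z T ω ∂P = 0 := by
      rw [← integral_indicator hs', ← h0]
      congr 1
      ext ω
      by_cases h : ω ∈ s <;> simp [h]
    have h2 : ∫ ω in s, M (T + 1) ω ∂P = ∫ ω in s, M T ω ∂P := by
      simp_rw [hMs]
      rw [integral_add (hMi T).integrableOn ((hZi T).const_mul _).integrableOn,
        integral_const_mul, h1]
      simp
    exact h2.ge
  have hsq : ∀ T, ∫ ω, M T ω ^ 2 ∂P ≤ B ^ 2 * ∑ t ∈ Finset.range T, e t ^ 2 := by
    intro T
    induction T with
    | zero => simp [hM]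
    | succ T ih =>
      obtain ⟨C, hC⟩ := hMb T
      have hi1 : Integrable (fun ω => M T ω ^ 2) P := by
        refine bint _ ((hMm' T).pow_const 2) ⟨C ^ 2, fun ω => ?_⟩
        rw [abs_pow]
        exact pow_le_pow_left₀ (abs_nonneg _) (hC ω) 2
      have hi2 : Integrable (fun ω => M T ω * Z T ω) P := by
        refine bint _ ((hMm' T).mul (hZm' T)) ⟨C * B, fun ω => ?_⟩
        rw [abs_mul]
        exact mul_le_mul (hC ω) (hZb T ω) (abs_nonneg _) ((abs_nonneg _).trans (hC ω))
      have hi3 : Integrable (fun ω => Z T ω ^ 2) P := by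
        refine bint _ ((hZm' T).pow_const 2) ⟨B ^ 2, fun ω => ?_⟩
        rw [abs_pow]
        exact pow_le_pow_left₀ (abs_nonneg _) (hZb T ω) 2
      have h3 : ∫ ω, Z T ω ^ 2 ∂P ≤ B ^ 2 := by
        calc ∫ ω, Z T ω ^ 2 ∂P ≤ ∫ _, B ^ 2 ∂P := by
              refine integral_mono hi3 (integrable_const _) fun ω => ?_
              show Z T ω ^ 2 ≤ B ^ 2
              rw [← sq_abs]
              exact pow_le_pow_left₀ (abs_nonneg _) (hZb T ω) 2
          _ = B ^ 2 := by simp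
      have h4 : ∫ ω, M (T + 1) ω ^ 2 ∂P =
          ∫ ω, M T ω ^ 2 ∂P + 2 * e T * ∫ ω, M T ω * Z T ω ∂P + e T ^ 2 * ∫ ω, Z T ω ^ 2 ∂P := by
        rw [← integral_const_mul, ← integral_const_mul,
          ← integral_add hi1 (hi2.const_mul _)]
        have hi12 : Integrable (fun ω => M T ω ^ 2 + 2 * e T * (M T ω * Z T ω)) P :=
          hi1.add (hi2.const_mul _)
        rw [← integral_add hi12 (hi3.const_mul _)]
        congr 1
        ext ω
        rw [hMs]
        ring
      rw [h4, hZ0 T (M T) (hMm T) (hMb T), Finset.sum_range_succ]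
      nlinarith [sq_nonneg (e T)]
  set R : ℝ := 1 + B ^ 2 * ∑' t, e t ^ 2 with hR
  have hR0 : 0 ≤ R := by
    have : 0 ≤ ∑' t, e t ^ 2 := tsum_nonneg fun t => sq_nonneg _
    positivity
  have hL1 : ∀ T, eLpNorm (M T) 1 P ≤ (R.toNNReal : ℝ≥0∞) := by
    intro T
    rw [eLpNorm_one_eq_lintegral_enorm, ← ofReal_integral_norm_eq_lintegral_enorm (hMi T)]
    refine ENNReal.ofReal_le_ofReal ?_
    obtain ⟨C, hC⟩ := hMb T
    have hi1 : Integrable (fun ω => M T ω ^ 2) P := by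
      refine bint _ ((hMm' T).pow_const 2) ⟨C ^ 2, fun ω => ?_⟩
      rw [abs_pow]
      exact pow_le_pow_left₀ (abs_nonneg _) (hC ω) 2
    calc ∫ ω, ‖M T ω‖ ∂P ≤ ∫ ω, (1 + M T ω ^ 2) ∂P := by
          refine integral_mono (hMi T).norm ((integrable_const _).add hi1) fun ω => ?_
          show ‖M T ω‖ ≤ 1 + M T ω ^ 2
          rw [Real.norm_eq_abs, ← sq_abs]
          nlinarith [sq_nonneg (|M T ω| - 1), abs_nonneg (M T ω)]
      _ = 1 + ∫ ω, M T ω ^ 2 ∂P := by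
          rw [integral_add (integrable_const _) hi1]
          simp
      _ ≤ R := by
          have := hsq T
          have h5 : ∑ t ∈ Finset.range T, e t ^ 2 ≤ ∑' t, e t ^ 2 :=
            he.sum_le_tsum _ fun t _ => sq_nonneg _
          have := mul_le_mul_of_nonneg_left h5 (sq_nonneg B)
          rw [hR]
          linarith
  exact hsub.exists_ae_tendsto_of_bdd hL1

/-- Freezing lemma: conditional mean zero from independence. -/
lemma indep_integral_zero {E : Type*} [MeasurableSpace E] (ℱ : Filtration ℕ mΩ) (T : ℕ)
    {μ : Measure ℝ} [IsProbabilityMeasure μ] {V : Ω → E} {Y : Ω → ℝ} (hV : Measurable[ℱ T] V)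
    (hY : Measurable Y) (hYlaw : P.map Y = μ)
    (hind : Indep (MeasurableSpace.comap Y inferInstance) (ℱ T) P)
    {G : E → ℝ → ℝ} (hG : Measurable (fun p : E × ℝ => G p.1 p.2))
    (hG0 : ∀ v, ∫ x, G v x ∂μ = 0) {B : ℝ} (hGb : ∀ ω, |G (V ω) (Y ω)| ≤ B)
    (g : Ω → ℝ) (hg : Measurable[ℱ T] g) (hgb : ∃ C, ∀ ω, |g ω| ≤ C) :
    ∫ ω, g ω * G (V ω) (Y ω) ∂P = 0 := by
  obtain ⟨C, hC⟩ := hgb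
  have hV' : Measurable V := hV.mono (ℱ.le T) le_rfl
  have hg' : Measurable g := hg.mono (ℱ.le T) le_rfl
  have hW : Measurable[ℱ T] (fun ω => (g ω, V ω)) := Measurable.prodMk hg hV
  have hW' : Measurable (fun ω => (g ω, V ω)) := hg'.prodMk hV'
  have hi : IndepFun (fun ω => (g ω, V ω)) Y P := by
    rw [IndepFun_iff_Indep]
    exact (indep_of_indep_of_le_right hind hW.comap_le).symm
  rw [indepFun_iff_map_prod_eq_prod_map_map hW'.aemeasurable hY.aemeasurable, hYlaw] at hi
  set F : (ℝ × E) × ℝ → ℝ := fun p => p.1.1 * G p.1.2 p.2 with hF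
  have hFm : Measurable F := by
    refine (measurable_fst.comp measurable_fst).mul ?_
    exact hG.comp ((measurable_snd.comp measurable_fst).prodMk measurable_snd)
  have hpair : Measurable (fun ω => ((g ω, V ω), Y ω)) := hW'.prodMk hY
  have hFi : Integrable F (P.map (fun ω => ((g ω, V ω), Y ω))) := by
    rw [integrable_map_measure hFm.aestronglyMeasurable hpair.aemeasurable]
    refine Integrable.of_bound (hFm.comp hpair).aestronglyMeasurable (C * B)
      (Eventually.of_forall fun ω => ?_)
    simp only [hF, Function.comp_def, Real.norm_eq_abs, abs_mul]
    exact mul_le_mul (hC ω) (hGb ω) (abs_nonneg _) ((abs_nonneg _).trans (hC ω))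
  have h1 : ∫ ω, g ω * G (V ω) (Y ω) ∂P = ∫ p, F p ∂(P.map (fun ω => ((g ω, V ω), Y ω))) := by
    rw [integral_map hpair.aemeasurable hFm.aestronglyMeasurable]
  haveI : IsProbabilityMeasure (P.map (fun ω => (g ω, V ω))) :=
    Measure.isProbabilityMeasure_map hW'.aemeasurable
  rw [hi] at hFi h1
  rw [h1, integral_prod F hFi]
  simp [hF, integral_const_mul, hG0]

end noise


section process

variable {n : ℕ} {Λ : ℕ → ℝ} {μ : Measure ℝ} {s : Fin n → ℝ}

lemma hf_abs [IsProbabilityMeasure μ] (hμ : ∀ᵐ x ∂μ, x ∈ Set.Ioo (0 : ℝ) 1)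
    (hΛr : ∀ k, Λ k ∈ Set.Icc (0 : ℝ) 1) {m : Fin n → ℝ} (hm : m ∈ KK n) (i : Fin n) :
    |hf Λ μ m i| ≤ 1 := by
  have h1 := hf_le (μ := μ) hμ hΛr (hm.2 i).1
  have h2 := hf_ge (μ := μ) hμ hΛr (hm.2 i).2
  have h3 := hm.2 i
  rw [abs_le]
  constructor <;> linarith [h3.1, h3.2]

lemma measurable_comp_pair {Ω : Type*} {m' : MeasurableSpace Ω} {E : Type*} [MeasurableSpace E]
    {G : E → ℝ → ℝ}
    (hG : Measurable (fun p : E × ℝ => G p.1 p.2)) {V : Ω → E} {Y : Ω → ℝ}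
    (hV : Measurable V) (hY : Measurable Y) : Measurable (fun ω => G (V ω) (Y ω)) :=
  hG.comp (hV.prodMk hY)

variable [NeZero n] {Ω : Type*}

lemma somUpdate_eq {m : Fin n → ℝ} (hm : m ∈ Fplus n) (η x : ℝ) :
    somUpdate Λ η m x = fun i => m i - η * HH Λ m x i := by
  ext i
  unfold somUpdate HH
  rw [winner_eq hm.1]
  ring

lemma somProc_Fplus (hΛr : ∀ k, Λ k ∈ Set.Icc (0 : ℝ) 1) (hΛanti : Antitone Λ)
    {ε : ℕ → ℝ} (hε : ∀ t, ε t ∈ Set.Ioo (0 : ℝ) 1) {X : ℕ → Ω → ℝ}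
    (hX : ∀ t ω, X t ω ∈ Set.Ioo (0 : ℝ) 1) {m0 : Fin n → ℝ} (hm0 : m0 ∈ Fplus n) (t : ℕ) (ω : Ω) :
    somProc Λ ε X m0 t ω ∈ Fplus n := by
  induction t with
  | zero => exact hm0
  | succ t ih =>
    show somUpdate _ _ _ _ ∈ _
    rw [somUpdate_eq ih]
    refine step_Fplus ih (hε _).1.le (hε _).2 (fun i j hij => ?_) (fun i => ?_) (fun i => ?_)
    · exact HH_gap hΛanti hΛr ih.1.monotone _ hij
    · exact HH_le hΛr (ih.2 i).1.le (hX _ _).1.le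
    · exact HH_ge hΛr (ih.2 i).2.le (hX _ _).2.le

variable [mΩ : MeasurableSpace Ω] {P : Measure Ω} [IsProbabilityMeasure P]

theorem sa_conv_aux [IsProbabilityMeasure μ] [NullSingletonClass μ]
    (hμ : ∀ᵐ x ∂μ, x ∈ Set.Ioo (0 : ℝ) 1)
    (hΛr : ∀ k, Λ k ∈ Set.Icc (0 : ℝ) 1) (hΛanti : Antitone Λ)
    (H : GoodField (fun m => hf Λ μ m) s)
    {ε : ℕ → ℝ} (hε : ∀ t, ε t ∈ Set.Ioo (0 : ℝ) 1)
    (hεdiv : Tendsto (fun T => ∑ t ∈ Finset.range T, ε t) atTop atTop)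
    (hεsq : Summable fun t => ε t ^ 2)
    {X : ℕ → Ω → ℝ} (hXm : ∀ t, Measurable (X t)) (hXlaw : ∀ t, P.map (X t) = μ)
    (hXi : iIndepFun X P)
    (hX : ∀ t ω, X t ω ∈ Set.Ioo (0 : ℝ) 1) {m0 : Fin n → ℝ} (hm0 : m0 ∈ Fplus n) :
    ∀ᵐ ω ∂P, Tendsto (fun t => somProc Λ ε X m0 t ω) atTop (𝓝 s) := by
  have hXs : ∀ t, StronglyMeasurable (X t) := fun t => (hXm t).stronglyMeasurable
  set ℱ := Filtration.natural X hXs with hℱ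
  set m := somProc Λ ε X m0 with hmdef
  have hF : ∀ t ω, m t ω ∈ Fplus n := somProc_Fplus hΛr hΛanti hε hX hm0
  have hK : ∀ t ω, m t ω ∈ KK n := fun t ω => Fplus_sub_KK (hF t ω)
  have hstep : ∀ t ω i, m (t + 1) ω i = m t ω i - ε (t + 1) * HH Λ (m t ω) (X (t + 1) ω) i := by
    intro t ω i
    have : m (t + 1) ω = _ := somUpdate_eq (Λ := Λ) (hF t ω) (ε (t + 1)) (X (t + 1) ω)
    rw [this]
  have hm00 : m 0 = fun _ => m0 := rfl
  clear_value m
  have hXa : ∀ t, Measurable[ℱ t] (X t) := fun t =>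
    (Filtration.stronglyAdapted_natural hXs t).measurable
  have hmm : ∀ t, Measurable[ℱ t] (m t) := by
    intro t
    induction t with
    | zero =>
      rw [hm00]
      exact @measurable_const _ _ _ (ℱ 0) m0
    | succ t ih =>
      have h1 : Measurable[ℱ (t + 1)] (m t) := ih.mono (ℱ.mono (Nat.le_succ t)) le_rfl
      refine @measurable_pi_lambda _ _ _ (ℱ (t + 1)) _ _ fun i => ?_
      have h3 : (fun ω => m (t + 1) ω i) =
          fun ω => m t ω i - ε (t + 1) * HH Λ (m t ω) (X (t + 1) ω) i := by
        ext ω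
        exact hstep t ω i
      rw [h3]
      have h4 : Measurable[ℱ (t + 1)] (fun ω => m t ω i) := (measurable_pi_apply i).comp h1
      have h5 : Measurable[ℱ (t + 1)] (fun ω => HH Λ (m t ω) (X (t + 1) ω) i) :=
        measurable_comp_pair (G := fun v x => HH Λ v x i) (measurable_HH i) h1 (hXa (t + 1))
      exact h4.sub (h5.const_mul _)
  have hhf : ∀ i, Measurable (fun m : Fin n → ℝ => hf Λ μ m i) := fun i => (H.cont i).measurable
  have hconv : ∀ i, ∀ᵐ ω ∂P, ∃ L, Tendsto (fun T => ∑ t ∈ Finset.range T,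
      ε (t + 1) * (hf Λ μ (m t ω) i - HH Λ (m t ω) (X (t + 1) ω) i)) atTop (𝓝 L) := by
    intro i
    have hG : Measurable (fun p : (Fin n → ℝ) × ℝ => hf Λ μ p.1 i - HH Λ p.1 p.2 i) :=
      ((hhf i).comp measurable_fst).sub (measurable_HH i)
    have hGb : ∀ t ω, |hf Λ μ (m t ω) i - HH Λ (m t ω) (X (t + 1) ω) i| ≤ 2 := by
      intro t ω
      have h1 := hf_abs (μ := μ) hμ hΛr (hK t ω) i
      have h2 := HH_abs hΛr (m t ω) i (X (t + 1) ω)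
      have h3 : |m t ω i - X (t + 1) ω| ≤ 1 := by
        have := (hF t ω).2 i
        have := hX (t + 1) ω
        simp only [Set.mem_Ioo] at *
        rw [abs_le]
        constructor <;> linarith
      refine (abs_sub _ _).trans ?_
      linarith
    refine noise_conv ℱ (fun t ω => hf Λ μ (m t ω) i - HH Λ (m t ω) (X (t + 1) ω) i) 2 ?_ hGb ?_
      (fun t => ε (t + 1)) ((summable_nat_add_iff 1).2 hεsq)
    · intro t
      have h1 : Measurable[ℱ (t + 1)] (m t) := (hmm t).mono (ℱ.mono (Nat.le_succ t)) le_rfl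
      exact measurable_comp_pair
        (G := fun v x => hf Λ μ v i - HH Λ v x i) hG h1 (hXa (t + 1))
    · intro t g hg hgb
      refine indep_integral_zero (μ := μ) ℱ t (hmm t) (hXm (t + 1)) (hXlaw _)
        (hXi.indep_comap_natural_of_lt hXs (Nat.lt_succ_self t))
        (G := fun v x => hf Λ μ v i - HH Λ v x i) hG ?_ (hGb t) g hg hgb
      intro v
      rw [integral_sub (integrable_const _) (integrable_HH hμ hΛr v i)]
      simp [hf]
  have hall := ae_all_iff.2 hconv
  have he0 : Tendsto (fun t => ε (t + 1)) atTop (𝓝 0) := by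
    have h1 : Tendsto ε atTop (𝓝 0) := by
      have h2 := hεsq.tendsto_atTop_zero
      have h3 := (Real.continuous_sqrt.tendsto 0).comp h2
      simp only [Real.sqrt_zero] at h3
      refine h3.congr fun t => ?_
      exact Real.sqrt_sq (hε t).1.le
    exact h1.comp (tendsto_add_atTop_nat 1)
  have hediv : Tendsto (fun T => ∑ t ∈ Finset.range T, ε (t + 1)) atTop atTop := by
    have h1 := hεdiv.comp (tendsto_add_atTop_nat 1)
    have h2 := tendsto_atTop_add_const_right _ (-ε 0) h1
    refine h2.congr fun T => ?_
    simp only [Function.comp]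
    rw [Finset.sum_range_succ']
    ring
  filter_upwards [hall] with ω hω
  have hd : ∀ i t, |-hf Λ μ (m t ω) i| ≤ 1 := fun i t => by
    rw [abs_neg]
    exact hf_abs hμ hΛr (hK t ω) i
  refine H.tendsto (Eventually.of_forall fun t => hK t ω) ?_ ?_
  · intro i a δ c hδ hc hev
    obtain ⟨L, hL⟩ := hω i
    refine scalar_sa (y := fun t => m t ω i) (d := fun t => -hf Λ μ (m t ω) i)
      (e := fun t => ε (t + 1)) hδ hc ?_ hL (fun t => (hε _).1.le) he0 hediv (hd i) ?_
    · intro t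
      rw [hstep, Finset.sum_range_succ]
      ring
    · filter_upwards [hev] with t ht h
      linarith [ht h]
  · intro i a δ c hδ hc hev
    obtain ⟨L, hL⟩ := hω i
    have := scalar_sa (y := fun t => -m t ω i) (d := fun t => hf Λ μ (m t ω) i) (a := -a)
      (e := fun t => ε (t + 1)) hδ hc ?_ hL.neg (fun t => (hε _).1.le) he0 hediv
      (fun t => hf_abs hμ hΛr (hK t ω) i) ?_
    · filter_upwards [this] with t ht
      linarith
    · intro t
      rw [hstep, Finset.sum_range_succ]
      ring
    · filter_upwards [hev] with t ht h
      exact ht (by linarith)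

theorem sa_conv [IsProbabilityMeasure μ] [NullSingletonClass μ]
    (hμ : ∀ᵐ x ∂μ, x ∈ Set.Ioo (0 : ℝ) 1)
    (hΛr : ∀ k, Λ k ∈ Set.Icc (0 : ℝ) 1) (hΛanti : Antitone Λ)
    (H : GoodField (fun m => hf Λ μ m) s)
    {ε : ℕ → ℝ} (hε : ∀ t, ε t ∈ Set.Ioo (0 : ℝ) 1)
    (hεdiv : Tendsto (fun T => ∑ t ∈ Finset.range T, ε t) atTop atTop)
    (hεsq : Summable fun t => ε t ^ 2)
    {X : ℕ → Ω → ℝ} (hXm : ∀ t, Measurable (X t)) (hXlaw : ∀ t, P.map (X t) = μ)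
    (hXi : iIndepFun X P) {m0 : Fin n → ℝ} (hm0 : m0 ∈ Fplus n) :
    ∀ᵐ ω ∂P, Tendsto (fun t => somProc Λ ε X m0 t ω) atTop (𝓝 s) := by
  set φ : ℝ → ℝ := fun x => if x ∈ Set.Ioo (0 : ℝ) 1 then x else 1 / 2 with hφ
  have hφm : Measurable φ := Measurable.ite measurableSet_Ioo measurable_id measurable_const
  have hφI : ∀ x, φ x ∈ Set.Ioo (0 : ℝ) 1 := by
    intro x
    by_cases h : x ∈ Set.Ioo (0 : ℝ) 1
    · simp only [hφ, if_pos h]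
      exact h
    · simp only [hφ, if_neg h]
      norm_num
  have hφid : ∀ᵐ x ∂μ, φ x = x := by
    filter_upwards [hμ] with x hx
    simp only [hφ, if_pos hx]
  have hφlaw : μ.map φ = μ := by
    have h1 : φ =ᵐ[μ] id := hφid
    rw [Measure.map_congr h1, Measure.map_id]
  have h := sa_conv_aux (P := P) hμ hΛr hΛanti H hε hεdiv hεsq (X := fun t => φ ∘ X t)
    (fun t => hφm.comp (hXm t))
    (fun t => by rw [← Measure.map_map hφm (hXm t), hXlaw, hφlaw])
    (hXi.comp (fun _ => φ) (fun _ => hφm)) (fun t ω => hφI _) hm0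
  have heq : ∀ᵐ ω ∂P, ∀ t, φ (X t ω) = X t ω := by
    rw [ae_all_iff]
    intro t
    have h1 := hφid
    rw [← hXlaw t] at h1
    exact ae_of_ae_map (hXm t).aemeasurable h1
  filter_upwards [h, heq] with ω h1 h2
  have h3 : ∀ t, somProc Λ ε (fun t => φ ∘ X t) m0 t ω = somProc Λ ε X m0 t ω := by
    intro t
    induction t with
    | zero => rfl
    | succ t ih =>
      show somUpdate _ _ _ _ = somUpdate _ _ _ _
      rw [ih]
      simp only [Function.comp, h2]
  simpa only [h3] using h1

end process


section ode

variable {n : ℕ} {Λ : ℕ → ℝ} {μ : Measure ℝ} {s : Fin n → ℝ}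

lemma isOpen_Fplus : IsOpen (Fplus n) := by
  have h : Fplus n = (⋂ i : Fin n, ⋂ j : Fin n, {m : Fin n → ℝ | i < j → m i < m j}) ∩
      ⋂ i : Fin n, {m : Fin n → ℝ | m i ∈ Set.Ioo (0 : ℝ) 1} := by
    ext m
    simp only [Fplus, StrictMono, Set.mem_inter_iff, Set.mem_iInter, Set.mem_setOf_eq]
  rw [h]
  refine IsOpen.inter (isOpen_iInter_of_finite fun i => isOpen_iInter_of_finite fun j => ?_)
    (isOpen_iInter_of_finite fun i => isOpen_Ioo.preimage (continuous_apply i))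
  by_cases hij : i < j
  · simp only [hij, true_imp_iff]
    exact isOpen_lt (continuous_apply i) (continuous_apply j)
  · simp [hij]

lemma gronwall_pos {d d' : ℝ → ℝ} {τ : ℝ} (hτ : 0 ≤ τ) (hd : ∀ t, HasDerivAt d (d' t) t)
    (h : ∀ t ∈ Set.Ioo 0 τ, - d t ≤ d' t) (h0 : 0 < d 0) : 0 < d τ := by
  have hD : ∀ t, HasDerivAt (fun t => Real.exp t * d t)
      (Real.exp t * d t + Real.exp t * d' t) t := fun t => (Real.hasDerivAt_exp t).mul (hd t)
  have hmono : MonotoneOn (fun t => Real.exp t * d t) (Set.Icc 0 τ) := by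
    refine monotoneOn_of_deriv_nonneg (convex_Icc 0 τ)
      (fun t _ => (hD t).continuousAt.continuousWithinAt)
      (fun t _ => (hD t).differentiableAt.differentiableWithinAt) ?_
    intro t ht
    rw [interior_Icc] at ht
    rw [(hD t).deriv]
    have := h t ht
    have := Real.exp_pos t
    nlinarith
  have h1 := hmono (Set.left_mem_Icc.2 hτ) (Set.right_mem_Icc.2 hτ) hτ
  simp only [Real.exp_zero, one_mul] at h1
  have h2 : 0 < Real.exp τ * d τ := h0.trans_le h1
  exact pos_of_mul_pos_right h2 (Real.exp_pos τ).le

lemma ode_Fplus {h F : (Fin n → ℝ) → Fin n → ℝ} (H : GoodField h s)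
    (hF : ∀ m ∈ KK n, F m = h m) {g : ℝ → Fin n → ℝ} (hg0 : g 0 ∈ Fplus n)
    (hg : ∀ t, HasDerivAt g (-(F (g t))) t) (t : ℝ) (ht : 0 ≤ t) : g t ∈ Fplus n := by
  have hgi : ∀ i t, HasDerivAt (fun t => g t i) (-(F (g t) i)) t := fun i t =>
    hasDerivAt_pi.1 (hg t) i
  have hcont : Continuous g := continuous_iff_continuousAt.2 fun t => (hg t).continuousAt
  by_contra hcon
  set A : Set ℝ := {t | 0 ≤ t ∧ g t ∉ Fplus n} with hA
  have hAc : IsClosed A :=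
    (isClosed_Ici (a := (0 : ℝ))).inter (isOpen_Fplus.isClosed_compl.preimage hcont)
  have hAne : A.Nonempty := ⟨t, ht, hcon⟩
  have hAb : BddBelow A := ⟨0, fun x hx => hx.1⟩
  set τ := sInf A with hτ
  have hτA : τ ∈ A := hAc.csInf_mem hAne hAb
  have hlt : ∀ u ∈ Set.Ioo 0 τ, g u ∈ Fplus n := by
    intro u hu
    by_contra hc
    exact absurd (csInf_le hAb (show u ∈ A from ⟨hu.1.le, hc⟩)) (not_le.2 hu.2)
  have hltK : ∀ u ∈ Set.Ioo 0 τ, g u ∈ KK n := fun u hu => Fplus_sub_KK (hlt u hu)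
  refine hτA.2 ⟨fun i j hij => ?_, fun i => ⟨?_, ?_⟩⟩
  · have := gronwall_pos hτA.1 (fun t => (hgi j t).sub (hgi i t)) (fun u hu => ?_)
      (sub_pos.2 (hg0.1 hij))
    · exact sub_pos.1 this
    · have h1 := H.gap _ (hltK u hu) i j hij.le
      rw [hF _ (hltK u hu)]
      simp only [Pi.sub_apply]
      linarith
  · refine gronwall_pos hτA.1 (hgi i) (fun u hu => ?_) (hg0.2 i).1
    have h1 := H.lo _ (hltK u hu) i
    rw [hF _ (hltK u hu)]
    linarith
  · have := gronwall_pos hτA.1 (fun t => (hgi i t).const_sub 1) (fun u hu => ?_)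
      (sub_pos.2 (hg0.2 i).2)
    · exact sub_pos.1 this
    · have h1 := H.hi _ (hltK u hu) i
      rw [hF _ (hltK u hu)]
      linarith

theorem ode_conv {h F : (Fin n → ℝ) → Fin n → ℝ} (H : GoodField h s)
    (hF : ∀ m ∈ KK n, F m = h m) {g : ℝ → Fin n → ℝ} (hg0 : g 0 ∈ Fplus n)
    (hg : ∀ t, HasDerivAt g (-(F (g t))) t) : Tendsto g atTop (𝓝 s) := by
  have hgi : ∀ i t, HasDerivAt (fun t => g t i) (-(F (g t) i)) t := fun i t =>
    hasDerivAt_pi.1 (hg t) i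
  have hK : ∀ᶠ t in atTop, g t ∈ KK n := by
    filter_upwards [eventually_ge_atTop 0] with t ht
    exact Fplus_sub_KK (ode_Fplus H hF hg0 hg t ht)
  refine H.tendsto hK ?_ ?_
  · intro i a δ c hδ hc hev
    refine scalar_ode hδ hc (hgi i) ?_
    filter_upwards [hev, hK] with t ht hk h1
    rw [hF _ hk]
    linarith [ht h1]
  · intro i a δ c hδ hc hev
    have := scalar_ode (a := -a) hδ hc (fun t => (hgi i t).neg) ?_
    · filter_upwards [this] with t ht
      simp only [Pi.neg_apply] at ht
      linarith
    · filter_upwards [hev, hK] with t ht hk h1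
      simp only [Pi.neg_apply] at h1
      rw [hF _ hk, neg_neg]
      exact ht (by linarith)

end ode


/-- Under `H_Λ` and `H_μ`, the unique zero `m★` of the mean
field in `F_n^+` is an attracting equilibrium of the ODE `dm/dt = -h(m)`, and
for gains with `Σ ε_t = ∞`, `Σ ε_t² < ∞`, the SOM process started in `F_n^+`
converges to `m★` almost surely. -/
theorem som_as_convergence_dim1 {n : ℕ} [NeZero n] (hn : 2 ≤ n)
    (Λ : ℕ → ℝ) (hΛanti : Antitone Λ) (hΛ0 : Λ 0 = 1)
    (hΛrange : ∀ k, Λ k ∈ Set.Icc (0 : ℝ) 1) (hHΛ : HLambda n Λ)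
    (μ : Measure ℝ) [IsProbabilityMeasure μ] (f : ℝ → ℝ)
    (hdens : μ = volume.withDensity fun x => ENNReal.ofReal (f x))
    (hsupp : ∀ x, x ∉ Set.Icc (0 : ℝ) 1 → f x = 0)
    (hHμ : Hmu f)
    (mstar : Fin n → ℝ) (hmstarF : mstar ∈ Fplus n)
    (hmstarzero : meanField Λ f mstar = 0)
    (hmstaruniq : ∀ m ∈ Fplus n, meanField Λ f m = 0 → m = mstar)
    (ε : ℕ → ℝ) (hεmem : ∀ t, ε t ∈ Set.Ioo (0 : ℝ) 1)
    (hεdiv : Tendsto (fun T => ∑ t ∈ Finset.range T, ε t) atTop atTop)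
    (hεsq : Summable fun t => ε t ^ 2)
    {Ω : Type*} [MeasurableSpace Ω] (P : Measure Ω) [IsProbabilityMeasure P]
    (X : ℕ → Ω → ℝ) (hXmeas : ∀ t, Measurable (X t))
    (hXlaw : ∀ t, P.map (X t) = μ)
    (hXindep : iIndepFun X P) :
    (∃ U ∈ nhds mstar, U ⊆ Fplus n ∧
      ∀ g : ℝ → Fin n → ℝ, g 0 ∈ U →
        (∀ t : ℝ, HasDerivAt g (-(meanField Λ f (g t))) t) →
        Tendsto g atTop (nhds mstar)) ∧
    ∀ m0 ∈ Fplus n,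
      ∀ᵐ ω ∂P, Tendsto (fun t => somProc Λ ε X m0 t ω) atTop (nhds mstar) := by
  have hμ := dens_ae hdens hsupp
  have hfm := hHμ.measurable hsupp
  have hfp := hHμ.1
  have hnull : NullSingletonClass μ := dens_null hdens
  have hpos := dens_pos hdens hfm hfp
  have hmf : ∀ m ∈ KK n, meanField Λ f m = hf Λ μ m := fun m hm =>
    funext fun i => meanField_eq (by omega) hdens hsupp hfm hfp hm i
  have H : GoodField (fun m => hf Λ μ m) mstar :=
    { cont := fun i => continuous_hf hμ hΛrange i
      lip := fun m m' hm hm' h i => hf_lip hμ hΛrange hΛanti hm.1 hm'.1 h i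
      gap := fun m hm i j hij => hf_gap hμ hΛrange hΛanti hm.1 hij
      lo := fun m hm i => hf_le hμ hΛrange (hm.2 i).1
      hi := fun m hm i => hf_ge hμ hΛrange (hm.2 i).2
      uniq := fun m hm hz => by
        refine hmstaruniq m (zero_Fplus hμ hpos hΛrange hΛ0 hΛanti hHΛ hm hz) ?_
        rw [hmf m hm]
        exact funext hz }
  refine ⟨⟨Fplus n, isOpen_Fplus.mem_nhds hmstarF, subset_rfl, ?_⟩, ?_⟩
  · intro g hg0 hg
    exact ode_conv H hmf hg0 hg
  · intro m0 hm0
    exact sa_conv hμ hΛrange hΛanti H hεmem hεdiv hεsq hXmeas hXlaw hXindep hm0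

end
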